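/- arXiv:1409.2289 — 5 statements merged into one kernel-verified Lean document; each statement's English description precedes it below -/
import Mathlib

section
/- Let d ≥ 1 and k ≥ 0 be integers and let u₀ : ℝ^d → ℝ satisfy ∫ |u₀(x)| (1 + |x|^{k+1}) dx < ∞. Let u(x,t) := (G(·,t) * u₀)(x) and let u_k be the heat-kernel derivative approximation of order k built from u₀. For each multi-index α with |α| = k+1 set F_α(x) := (−1)^{|α|} ∫₀¹ (k+1) (1−t)^k t^{−d−|α|} (x^α / α!) u₀(x/t) dt. Then for every t > 0 and every x ∈ ℝ^d, u(x,t) − u_k(x,t) = Σ_{|α| = k+1} (D^α_x G(·,t) * F_α)(x). -/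
open MeasureTheory Real Filter

noncomputable section

/-- Partial derivative in the `i`-th coordinate direction on `ℝ^d`. -/
def pd (d : ℕ) (i : Fin d) (f : EuclideanSpace ℝ (Fin d) → ℝ) :
    EuclideanSpace ℝ (Fin d) → ℝ :=
  fun x => fderiv ℝ f x (EuclideanSpace.single i 1)

/-- Mixed partial derivative `D^α = ∂₁^{α₁} ⋯ ∂_d^{α_d}`. -/
def Dmul (d : ℕ) (α : Fin d → ℕ) (f : EuclideanSpace ℝ (Fin d) → ℝ) :
    EuclideanSpace ℝ (Fin d) → ℝ :=
  ((List.finRange d).map (fun i => (pd d i)^[α i])).foldr (· ∘ ·) id f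

/-- Heat kernel `G(x,t) = (4πt)^{-d/2} exp(-|x|²/(4t))` on `ℝ^d`. -/
def heatKernel (d : ℕ) (x : EuclideanSpace ℝ (Fin d)) (t : ℝ) : ℝ :=
  (4 * π * t) ^ (-(d : ℝ) / 2) * Real.exp (-‖x‖ ^ 2 / (4 * t))

/-- The heat-kernel derivative approximation of order `k` built from `u₀`. -/
def heatApprox (d k : ℕ) (u₀ : EuclideanSpace ℝ (Fin d) → ℝ)
    (x : EuclideanSpace ℝ (Fin d)) (t : ℝ) : ℝ :=
  ∑ j ∈ Finset.range (k + 1), ∑ α ∈ Finset.Nat.antidiagonalTuple d j,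
    ((-1 : ℝ) ^ (∑ i, α i) / ∏ i, ((α i).factorial : ℝ)) *
      (∫ y, (∏ i, y i ^ α i) * u₀ y) * Dmul d α (fun z => heatKernel d z t) x

/-- The remainder function `F_α`. Here `k` should satisfy `|α| = k+1`. -/
def Falpha (d k : ℕ) (α : Fin d → ℕ) (f : EuclideanSpace ℝ (Fin d) → ℝ)
    (x : EuclideanSpace ℝ (Fin d)) : ℝ :=
  (-1 : ℝ) ^ (∑ i, α i) * ∫ t in (0:ℝ)..1,
    ((k : ℝ) + 1) * (1 - t) ^ k / t ^ (d + ∑ i, α i) *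
      ((∏ i, x i ^ α i) / ∏ i, ((α i).factorial : ℝ)) * f (t⁻¹ • x)

/-- Physicists' Hermite polynomial `H_n(x) = (-1)^n e^{x²} (d/dx)^n e^{-x²}`. -/
def hPoly (n : ℕ) (x : ℝ) : ℝ :=
  (-1 : ℝ) ^ n * Real.exp (x ^ 2) * iteratedDeriv n (fun y => Real.exp (-y ^ 2)) x

/-- Partial derivative of a tensor product of functions of one variable. -/
lemma pd_prod {d : ℕ} (h : Fin d → ℝ → ℝ) (hh : ∀ j, Differentiable ℝ (h j)) (i : Fin d) :
    pd d i (fun z => ∏ j, h j (z j)) =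
      fun z => ∏ j, (Function.update h i (deriv (h i))) j (z j) := by
  funext x
  have hd : ∀ j ∈ (Finset.univ : Finset (Fin d)),
      HasFDerivAt (fun z : EuclideanSpace ℝ (Fin d) => h j (z j))
        (deriv (h j) (x j) • (EuclideanSpace.proj j : EuclideanSpace ℝ (Fin d) →L[ℝ] ℝ)) x := by
    intro j _
    exact ((hh j) (x j)).hasDerivAt.comp_hasFDerivAt x
      (EuclideanSpace.proj j : EuclideanSpace ℝ (Fin d) →L[ℝ] ℝ).hasFDerivAt
  have hp := HasFDerivAt.finsetProd hd
  unfold pd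
  rw [hp.fderiv, sum_apply, Finset.sum_eq_single i]
  · rw [← Finset.mul_prod_erase Finset.univ _ (Finset.mem_univ i)]
    have : ∏ j ∈ Finset.univ.erase i, Function.update h i (deriv (h i)) j (x j) =
        ∏ j ∈ Finset.univ.erase i, h j (x j) :=
      Finset.prod_congr rfl fun j hj => by
        rw [Function.update_of_ne (Finset.ne_of_mem_erase hj)]
    rw [this]
    simp [mul_comm]
  · intro j _ hj
    simp [hj]
  · simp

lemma contDiff_iteratedDeriv {h : ℝ → ℝ} (hh : ContDiff ℝ (⊤ : ℕ∞) h) (n : ℕ) :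
    ContDiff ℝ (⊤ : ℕ∞) (iteratedDeriv n h) := by
  rw [iteratedDeriv_eq_iterate]
  exact hh.iterate_deriv n

lemma pd_iterate_prod {d : ℕ} (h : Fin d → ℝ → ℝ) (hh : ∀ j, ContDiff ℝ (⊤ : ℕ∞) (h j))
    (i : Fin d) (n : ℕ) :
    (pd d i)^[n] (fun z => ∏ j, h j (z j)) =
      fun z => ∏ j, (Function.update h i (iteratedDeriv n (h i))) j (z j) := by
  induction n with
  | zero => simp
  | succ n ih =>
    rw [Function.iterate_succ_apply', ih, pd_prod]
    · simp [iteratedDeriv_succ]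
    · intro j
      rcases eq_or_ne j i with rfl | hj
      · simpa using (contDiff_iteratedDeriv (hh j) n).differentiable (by simp)
      · simpa [hj] using (hh j).differentiable (by simp)

/-- Mixed partial derivatives of a tensor product of smooth functions of one variable. -/
lemma Dmul_prod {d : ℕ} (α : Fin d → ℕ) (h : Fin d → ℝ → ℝ)
    (hh : ∀ j, ContDiff ℝ (⊤ : ℕ∞) (h j)) :
    Dmul d α (fun z => ∏ j, h j (z j)) = fun z => ∏ j, iteratedDeriv (α j) (h j) (z j) := by
  have key : ∀ l : List (Fin d), l.Nodup →
      (l.map (fun i => (pd d i)^[α i])).foldr (· ∘ ·) id (fun z => ∏ j, h j (z j)) =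
        fun z => ∏ j, (if j ∈ l then iteratedDeriv (α j) (h j) else h j) (z j) := by
    intro l hl
    induction l with
    | nil => simp
    | cons i l ih =>
      rw [List.nodup_cons] at hl
      rw [List.map_cons, List.foldr_cons, Function.comp_apply, ih hl.2,
        pd_iterate_prod (fun j => if j ∈ l then iteratedDeriv (α j) (h j) else h j)]
      · funext z
        refine Finset.prod_congr rfl fun j _ => ?_
        rcases eq_or_ne j i with rfl | hj
        · simp [hl.1]
        · simp [hj]
      · intro j
        split_ifs
        · exact contDiff_iteratedDeriv (hh j) _
        · exact hh j
  unfold Dmul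
  simpa using key _ (List.nodup_finRange d)

/-- Taylor expansion with integral remainder for a sequence `T j` of normalized derivatives. -/
lemma taylor_of_hasDerivAt (T : ℕ → ℝ → ℝ)
    (hT : ∀ j s, HasDerivAt (T j) (-((j + 1 : ℝ) * T (j + 1) s)) s) (k : ℕ) :
    T 0 1 - ∑ j ∈ Finset.range (k + 1), (-1 : ℝ) ^ j * T j 0 =
      ∫ s in (0 : ℝ)..1, (-1 : ℝ) ^ (k + 1) * ((k + 1 : ℝ) * (1 - s) ^ k * T (k + 1) s) := by
  have hc : ∀ j, Continuous (T j) := fun j =>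
    continuous_iff_continuousAt.2 fun s => (hT j s).continuousAt
  rw [intervalIntegral.integral_const_mul]
  induction k with
  | zero =>
    have := intervalIntegral.integral_eq_sub_of_hasDerivAt (a := 0) (b := 1)
      (fun s _ => hT 0 s) ((by fun_prop : Continuous _).intervalIntegrable _ _)
    rw [intervalIntegral.integral_neg] at this
    simp at this ⊢
    linarith
  | succ k ih =>
    have hd : ∀ s : ℝ, HasDerivAt (fun s => (1 - s) ^ (k + 1) * T (k + 1) s)
        (-((k + 1 : ℝ) * (1 - s) ^ k * T (k + 1) s) -
          (((k + 1 : ℕ) : ℝ) + 1) * (1 - s) ^ (k + 1) * T (k + 1 + 1) s) s := by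
      intro s
      have h1 : HasDerivAt (fun s : ℝ => (1 - s) ^ (k + 1)) _ s :=
        ((hasDerivAt_id s).const_sub 1).fun_pow (k + 1)
      refine (h1.fun_mul (hT (k + 1) s)).congr_deriv ?_
      simp
      ring
    have := intervalIntegral.integral_eq_sub_of_hasDerivAt (a := 0) (b := 1)
      (fun s _ => hd s) ((by fun_prop : Continuous _).intervalIntegrable _ _)
    rw [intervalIntegral.integral_sub ((by fun_prop : Continuous _).intervalIntegrable _ _)
      ((by fun_prop : Continuous _).intervalIntegrable _ _),
      intervalIntegral.integral_neg] at this
    rw [Finset.sum_range_succ, ← sub_sub, ih]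
    simp at this
    rw [pow_succ (-1 : ℝ) (k + 1)]
    push_cast
    linear_combination -(-1 : ℝ) ^ (k + 1) * this

/-- Convolution of sequences of normalized derivatives. -/
lemma hasDerivAt_sum_antidiagonalTuple {d : ℕ} (c : Fin d → ℕ → ℝ → ℝ)
    (hc : ∀ i n s, HasDerivAt (c i n) (-((n + 1 : ℝ) * c i (n + 1) s)) s) (j : ℕ) (s : ℝ) :
    HasDerivAt (fun s => ∑ α ∈ Finset.Nat.antidiagonalTuple d j, ∏ i, c i (α i) s)
      (-((j + 1 : ℝ) * ∑ α ∈ Finset.Nat.antidiagonalTuple d (j + 1), ∏ i, c i (α i) s)) s := by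
  have h1 : HasDerivAt (fun s => ∑ α ∈ Finset.Nat.antidiagonalTuple d j, ∏ i, c i (α i) s)
      _ s := HasDerivAt.fun_sum fun α _ => HasDerivAt.fun_finsetProd fun i _ => hc i (α i) s
  convert h1 using 1
  rw [Finset.sum_comm]
  have h2 : ∀ i : Fin d, ∑ α ∈ Finset.Nat.antidiagonalTuple d j,
      (∏ l ∈ Finset.univ.erase i, c l (α l) s) • (-(((α i : ℕ) + 1 : ℝ) * c i (α i + 1) s)) =
      ∑ β ∈ Finset.Nat.antidiagonalTuple d (j + 1), -((β i : ℝ) * ∏ l, c l (β l) s) := by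
    intro i
    refine Finset.sum_of_injOn (fun α => Function.update α i (α i + 1)) ?_ ?_ ?_ ?_
    · intro α _ β _ h
      funext l
      have := congrFun h l
      rcases eq_or_ne l i with rfl | hl
      · simpa using this
      · simpa [hl] using this
    · intro α hα
      simp only [Finset.mem_coe, Finset.Nat.mem_antidiagonalTuple] at hα ⊢
      rw [Finset.sum_update_of_mem (Finset.mem_univ i), ← hα,
        ← Finset.add_sum_erase _ _ (Finset.mem_univ i), Finset.sdiff_singleton_eq_erase]
      ring
    · intro β hβ hn
      rcases Nat.eq_zero_or_pos (β i) with h0 | h0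
      · simp [h0]
      · refine absurd ⟨Function.update β i (β i - 1), ?_, ?_⟩ hn
        · simp only [Finset.mem_coe, Finset.Nat.mem_antidiagonalTuple] at hβ ⊢
          rw [Finset.sum_update_of_mem (Finset.mem_univ i), Finset.sdiff_singleton_eq_erase]
          rw [← Finset.add_sum_erase _ _ (Finset.mem_univ i)] at hβ
          omega
        · simp [Nat.sub_add_cancel h0]
    · intro α _
      rw [← Finset.mul_prod_erase Finset.univ _ (Finset.mem_univ i)]
      have : ∏ l ∈ Finset.univ.erase i, c l (Function.update α i (α i + 1) l) s =
          ∏ l ∈ Finset.univ.erase i, c l (α l) s :=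
        Finset.prod_congr rfl fun l hl => by
          rw [Function.update_of_ne (Finset.ne_of_mem_erase hl)]
      rw [this]
      simp
      ring
  rw [Finset.sum_congr rfl fun i _ => h2 i, Finset.sum_comm, Finset.mul_sum,
    ← Finset.sum_neg_distrib]
  refine Finset.sum_congr rfl fun β hβ => ?_
  rw [Finset.Nat.mem_antidiagonalTuple] at hβ
  rw [Finset.sum_neg_distrib, ← Finset.sum_mul]
  congr 2
  exact_mod_cast hβ.symm

/-- The one-dimensional factor of the heat kernel. -/
def heatFactor (t r : ℝ) : ℝ := (4 * π * t) ^ (-(1 : ℝ) / 2) * Real.exp (-(r ^ 2 / (4 * t)))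

lemma contDiff_heatFactor (t : ℝ) : ContDiff ℝ (⊤ : ℕ∞) (heatFactor t) := by
  unfold heatFactor
  fun_prop

lemma heatKernel_eq_prod {d : ℕ} {t : ℝ} (ht : 0 < t) :
    (fun z => heatKernel d z t) = fun z => ∏ i, heatFactor t (z i) := by
  funext z
  unfold heatKernel heatFactor
  rw [Finset.prod_mul_distrib, ← Real.exp_sum, Finset.prod_const, Finset.card_univ,
    Fintype.card_fin, ← Real.rpow_mul_natCast (by positivity), EuclideanSpace.norm_sq_eq,
    Finset.sum_neg_distrib, ← Finset.sum_div]
  congr 2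
  · ring
  · simp [neg_div]

lemma exists_abs_polynomial_mul_exp_le (p : Polynomial ℝ) {a : ℝ} (ha : 0 < a) :
    ∃ C, ∀ r : ℝ, |p.eval r * Real.exp (-(r ^ 2 / a))| ≤ C := by
  induction p using Polynomial.induction_on' with
  | add p q hp hq =>
    obtain ⟨C, hC⟩ := hp
    obtain ⟨D, hD⟩ := hq
    refine ⟨C + D, fun r => ?_⟩
    rw [Polynomial.eval_add, add_mul]
    exact (abs_add_le _ _).trans (add_le_add (hC r) (hD r))
  | monomial n c =>
    refine ⟨|c| * (1 + a ^ n * n.factorial), fun r => ?_⟩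
    have h1 : |r| ^ n ≤ 1 + (r ^ 2) ^ n := by
      rw [← sq_abs r, ← pow_mul, mul_comm 2 n, pow_mul]
      nlinarith [sq_nonneg (|r| ^ n - 1), sq_nonneg (|r| ^ n)]
    have h2 := Real.pow_div_factorial_le_exp (r ^ 2 / a) (by positivity) n
    have h3 : (r ^ 2) ^ n ≤ a ^ n * n.factorial * Real.exp (r ^ 2 / a) := by
      rw [div_pow, div_div, div_le_iff₀ (by positivity)] at h2
      linarith
    have h4 : (1 : ℝ) ≤ Real.exp (r ^ 2 / a) := Real.one_le_exp (by positivity)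
    rw [Polynomial.eval_monomial, abs_mul, abs_mul, abs_pow, Real.abs_exp, mul_assoc,
      Real.exp_neg, ← div_eq_mul_inv]
    refine mul_le_mul_of_nonneg_left ?_ (abs_nonneg c)
    rw [div_le_iff₀ (Real.exp_pos _)]
    linarith

lemma exists_abs_iteratedDeriv_heatFactor_le {t : ℝ} (ht : 0 < t) (n : ℕ) :
    ∃ C, ∀ r : ℝ, |iteratedDeriv n (heatFactor t) r| ≤ C := by
  have key : ∃ p : Polynomial ℝ, iteratedDeriv n (heatFactor t) =
      fun r => p.eval r * Real.exp (-(r ^ 2 / (4 * t))) := by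
    induction n with
    | zero =>
      refine ⟨Polynomial.C ((4 * π * t) ^ (-(1 : ℝ) / 2)), ?_⟩
      funext r
      simp [heatFactor]
    | succ n ih =>
      obtain ⟨p, hp⟩ := ih
      refine ⟨p.derivative - p * (Polynomial.C (2 / (4 * t)) * Polynomial.X), ?_⟩
      funext r
      rw [iteratedDeriv_succ, hp]
      have h1 : HasDerivAt (fun r : ℝ => Real.exp (-(r ^ 2 / (4 * t)))) _ r :=
        (((hasDerivAt_pow 2 r).div_const (4 * t)).fun_neg).exp
      rw [((p.hasDerivAt r).fun_mul h1).deriv]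
      simp
      ring
  obtain ⟨p, hp⟩ := key
  rw [hp]
  exact exists_abs_polynomial_mul_exp_le p (by positivity)

lemma abs_prod_pow_le {d : ℕ} (α : Fin d → ℕ) (y : EuclideanSpace ℝ (Fin d)) :
    |∏ i, y i ^ α i| ≤ ‖y‖ ^ (∑ i, α i) := by
  rw [Finset.abs_prod, ← Finset.prod_pow_eq_pow_sum]
  refine Finset.prod_le_prod (fun _ _ => abs_nonneg _) fun i _ => ?_
  rw [abs_pow]
  exact pow_le_pow_left₀ (abs_nonneg _) (by simpa using PiLp.norm_apply_le y i) _

/-- Fubini's theorem combined with the change of variables `z = s • y`. -/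
lemma integral_integral_eq_of_smul {d : ℕ} (K L : ℝ → EuclideanSpace ℝ (Fin d) → ℝ)
    (hK : Integrable (Function.uncurry K) ((volume.restrict (Set.Ioc 0 1)).prod volume))
    (hL : AEStronglyMeasurable (Function.uncurry L)
      ((volume.restrict (Set.Ioc 0 1)).prod volume))
    (h : ∀ s ∈ Set.Ioc (0 : ℝ) 1, ∀ y, s ^ d * L s (s • y) = K s y) :
    ∫ z, ∫ s in (0 : ℝ)..1, L s z = ∫ y, ∫ s in (0 : ℝ)..1, K s y := by
  have hL' : ∀ s ∈ Set.Ioc (0 : ℝ) 1, ∀ y, L s (s • y) = (s ^ d)⁻¹ * K s y := by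
    intro s hs y
    have : s ^ d ≠ 0 := pow_ne_zero _ hs.1.ne'
    rw [← h s hs, inv_mul_cancel_left₀ this]
  have hint : Integrable (Function.uncurry L)
      ((volume.restrict (Set.Ioc 0 1)).prod volume) := by
    rw [integrable_prod_iff hL]
    rw [integrable_prod_iff hK.1] at hK
    constructor
    · filter_upwards [hK.1, ae_restrict_mem measurableSet_Ioc] with s hs hm
      rw [← integrable_comp_smul_iff volume _ hm.1.ne']
      simp only [Function.uncurry_apply_pair] at hs ⊢
      simp_rw [hL' s hm]
      exact hs.const_mul _
    · refine hK.2.congr ?_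
      filter_upwards [ae_restrict_mem measurableSet_Ioc] with s hm
      have := Measure.integral_comp_smul (volume : Measure (EuclideanSpace ℝ (Fin d)))
        (fun z => ‖L s z‖) s
      have hp : (0 : ℝ) < s ^ d := pow_pos hm.1 _
      rw [finrank_euclideanSpace_fin, abs_of_pos (inv_pos.2 hp), smul_eq_mul,
        eq_inv_mul_iff_mul_eq₀ hp.ne'] at this
      simp only [Function.uncurry_apply_pair]
      rw [← this, ← integral_const_mul]
      refine integral_congr_ae (ae_of_all _ fun y => ?_)
      simp only [← h s hm y, norm_mul, Real.norm_eq_abs, abs_of_pos hp]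
  simp_rw [intervalIntegral.integral_of_le (zero_le_one' ℝ)]
  rw [← integral_integral_swap hint, ← integral_integral_swap hK]
  refine setIntegral_congr_fun measurableSet_Ioc fun s hm => ?_
  have := Measure.integral_comp_smul (volume : Measure (EuclideanSpace ℝ (Fin d)))
    (fun z => L s z) s
  have hp : (0 : ℝ) < s ^ d := pow_pos hm.1 _
  rw [finrank_euclideanSpace_fin, abs_of_pos (inv_pos.2 hp), smul_eq_mul,
    eq_inv_mul_iff_mul_eq₀ hp.ne'] at this
  rw [← this, ← integral_const_mul]
  exact integral_congr_ae (ae_of_all _ fun y => h s hm y)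

lemma integrable_mul_of_le_norm_pow {d m : ℕ} {u₀ f : EuclideanSpace ℝ (Fin d) → ℝ}
    (hint : Integrable (fun x => u₀ x * (1 + ‖x‖ ^ m))) (hf : Continuous f) {C : ℝ}
    (hC : ∀ y, |f y| ≤ C * (1 + ‖y‖ ^ m)) :
    Integrable (fun y => f y * u₀ y) := by
  have hb : Integrable (fun y => (f y / (1 + ‖y‖ ^ m)) * (u₀ y * (1 + ‖y‖ ^ m))) := by
    refine hint.bdd_mul (c := C) ?_ (ae_of_all _ fun y => ?_)
    · exact (hf.div (by fun_prop) fun y => by positivity).aestronglyMeasurable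
    · have hp : 0 < 1 + ‖y‖ ^ m := by positivity
      rw [Real.norm_eq_abs, abs_div, abs_of_pos hp, div_le_iff₀ hp]
      exact hC y
  refine hb.congr (ae_of_all _ fun y => ?_)
  have hp : (1 + ‖y‖ ^ m) ≠ 0 := by positivity
  field_simp

lemma pow_le_one_add_pow {r : ℝ} (hr : 0 ≤ r) {j m : ℕ} (hj : j ≤ m) : r ^ j ≤ 1 + r ^ m := by
  rcases le_total r 1 with h | h
  · have := pow_le_one₀ hr h (n := j)
    have := pow_nonneg hr m
    linarith
  · have := pow_le_pow_right₀ h hj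
    linarith

lemma integrable_prod_pow_mul {d m : ℕ} {u₀ : EuclideanSpace ℝ (Fin d) → ℝ}
    (hint : Integrable (fun x => u₀ x * (1 + ‖x‖ ^ m))) (α : Fin d → ℕ) (hα : ∑ i, α i ≤ m) :
    Integrable (fun y => (∏ i, y i ^ α i) * u₀ y) := by
  refine integrable_mul_of_le_norm_pow hint (by fun_prop) (C := 1) fun y => ?_
  rw [one_mul]
  exact (abs_prod_pow_le α y).trans (pow_le_one_add_pow (norm_nonneg y) hα)

/-- The Taylor remainder integrand of multi-index `α`, before rescaling. -/
def remainderKernel (d k : ℕ) (α : Fin d → ℕ) (D u₀ : EuclideanSpace ℝ (Fin d) → ℝ)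
    (x : EuclideanSpace ℝ (Fin d)) (s : ℝ) (y : EuclideanSpace ℝ (Fin d)) : ℝ :=
  (-1 : ℝ) ^ (k + 1) * ((k + 1 : ℝ) * (1 - s) ^ k *
    ((∏ i, y i ^ α i) / (∏ i, ((α i).factorial : ℝ)) * D (x - s • y))) * u₀ y

lemma integrable_remainderKernel {d k : ℕ} {α : Fin d → ℕ} (hα : ∑ i, α i = k + 1)
    {D u₀ : EuclideanSpace ℝ (Fin d) → ℝ} (hD : Continuous D) {C : ℝ} (hC : ∀ z, |D z| ≤ C)
    (hint : Integrable (fun x => u₀ x * (1 + ‖x‖ ^ (k + 1)))) (x : EuclideanSpace ℝ (Fin d)) :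
    Integrable (Function.uncurry (remainderKernel d k α D u₀ x))
      ((volume.restrict (Set.Ioc 0 1)).prod volume) := by
  have h1 := integrable_prod_pow_mul hint α hα.le
  have h2 : Integrable (fun p : ℝ × EuclideanSpace ℝ (Fin d) =>
      (∏ i, p.2 i ^ α i) * u₀ p.2) ((volume.restrict (Set.Ioc 0 1)).prod volume) :=
    h1.comp_snd _
  have h3 : Integrable (fun p : ℝ × EuclideanSpace ℝ (Fin d) =>
      ((-1 : ℝ) ^ (k + 1) * ((k + 1 : ℝ) * (1 - p.1) ^ k) /
        (∏ i, ((α i).factorial : ℝ)) * D (x - p.1 • p.2)) * ((∏ i, p.2 i ^ α i) * u₀ p.2))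
      ((volume.restrict (Set.Ioc 0 1)).prod volume) := by
    refine h2.bdd_mul (c := (k + 1 : ℝ) / (∏ i, ((α i).factorial : ℝ)) * C) ?_ ?_
    · exact (by fun_prop : Continuous _).aestronglyMeasurable
    · have hs : ∀ᵐ p ∂((volume.restrict (Set.Ioc (0 : ℝ) 1)).prod
          (volume : Measure (EuclideanSpace ℝ (Fin d)))), p.1 ∈ Set.Ioc (0 : ℝ) 1 :=
        Measure.quasiMeasurePreserving_fst.ae (ae_restrict_mem measurableSet_Ioc)
      filter_upwards [hs] with p hp
      have h0 : 0 ≤ 1 - p.1 := sub_nonneg.2 hp.2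
      have h1 : (1 - p.1) ^ k ≤ 1 := pow_le_one₀ h0 (by linarith [hp.1])
      rw [Real.norm_eq_abs, abs_mul, abs_div, abs_mul, abs_neg_one_pow, one_mul,
        abs_of_nonneg (by positivity : 0 ≤ (k + 1 : ℝ) * (1 - p.1) ^ k),
        abs_of_nonneg (by positivity : 0 ≤ ∏ i, ((α i).factorial : ℝ))]
      gcongr
      · exact mul_le_of_le_one_right (by positivity) h1
      · exact hC _
  refine h3.congr (ae_of_all _ fun p => ?_)
  simp only [Function.uncurry_def, remainderKernel]
  ring

lemma integral_mul_Falpha {d k : ℕ} {α : Fin d → ℕ} (hα : ∑ i, α i = k + 1)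
    {D u₀ : EuclideanSpace ℝ (Fin d) → ℝ} (hD : Continuous D) {C : ℝ} (hC : ∀ z, |D z| ≤ C)
    (hint : Integrable (fun x => u₀ x * (1 + ‖x‖ ^ (k + 1)))) (x : EuclideanSpace ℝ (Fin d)) :
    ∫ z, D (x - z) * Falpha d k α u₀ z =
      ∫ y, ∫ s in (0 : ℝ)..1, remainderKernel d k α D u₀ x s y := by
  have hu : AEStronglyMeasurable u₀ := by
    have := integrable_prod_pow_mul hint (0 : Fin d → ℕ) (by simp)
    simpa using this.aestronglyMeasurable
  rw [← integral_integral_eq_of_smul (remainderKernel d k α D u₀ x)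
    (fun s z => D (x - z) * ((-1 : ℝ) ^ (∑ i, α i) *
      (((k : ℝ) + 1) * (1 - s) ^ k / s ^ (d + ∑ i, α i) *
        ((∏ i, z i ^ α i) / ∏ i, ((α i).factorial : ℝ)) * u₀ (s⁻¹ • z))))
    (integrable_remainderKernel hα hD hC hint x)]
  · refine integral_congr_ae (ae_of_all _ fun z => ?_)
    simp only [Falpha]
    rw [intervalIntegral.integral_const_mul, intervalIntegral.integral_const_mul]
  · have hq : Measure.QuasiMeasurePreserving
        (fun p : ℝ × EuclideanSpace ℝ (Fin d) => p.1⁻¹ • p.2)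
        ((volume.restrict (Set.Ioc 0 1)).prod volume) volume := by
      refine QuasiMeasurePreserving.prod_of_right (by fun_prop) ?_
      filter_upwards [ae_restrict_mem measurableSet_Ioc] with s hs
      exact Measure.quasiMeasurePreserving_smul volume (inv_ne_zero hs.1.ne')
    have hu' : AEStronglyMeasurable (fun p : ℝ × EuclideanSpace ℝ (Fin d) => u₀ (p.1⁻¹ • p.2))
        ((volume.restrict (Set.Ioc 0 1)).prod volume) := hu.comp_quasiMeasurePreserving hq
    have hm : Measurable (fun p : ℝ × EuclideanSpace ℝ (Fin d) =>
        ((k : ℝ) + 1) * (1 - p.1) ^ k / p.1 ^ (d + ∑ i, α i) *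
          ((∏ i, p.2 i ^ α i) / ∏ i, ((α i).factorial : ℝ))) := by
      fun_prop
    have hDm : Continuous (fun p : ℝ × EuclideanSpace ℝ (Fin d) => D (x - p.2)) := by fun_prop
    exact hDm.aestronglyMeasurable.mul ((hm.aestronglyMeasurable.mul hu').const_mul _)
  · intro s hs y
    have hs0 : s ≠ 0 := hs.1.ne'
    simp only [remainderKernel, inv_smul_smul₀ hs0, PiLp.smul_apply, smul_eq_mul, mul_pow,
      Finset.prod_mul_distrib, Finset.prod_pow_eq_pow_sum, hα]
    field_simp
    ring

/-- Pointwise Taylor expansion of a tensor product of smooth functions. -/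
lemma taylor_prod {d : ℕ} (h : ℝ → ℝ) (hh : ContDiff ℝ (⊤ : ℕ∞) h) (k : ℕ)
    (x y : EuclideanSpace ℝ (Fin d)) :
    ∏ i, h ((x - y) i) - ∑ j ∈ Finset.range (k + 1), ∑ α ∈ Finset.Nat.antidiagonalTuple d j,
        ((-1 : ℝ) ^ (∑ i, α i) / ∏ i, ((α i).factorial : ℝ)) * (∏ i, y i ^ α i) *
          ∏ i, iteratedDeriv (α i) h (x i) =
      ∫ s in (0 : ℝ)..1, ∑ α ∈ Finset.Nat.antidiagonalTuple d (k + 1),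
        (-1 : ℝ) ^ (k + 1) * ((k + 1 : ℝ) * (1 - s) ^ k *
          ((∏ i, y i ^ α i) / (∏ i, ((α i).factorial : ℝ)) *
            ∏ i, iteratedDeriv (α i) h ((x - s • y) i))) := by
  let c : Fin d → ℕ → ℝ → ℝ := fun i n s =>
    y i ^ n / (n.factorial : ℝ) * iteratedDeriv n h (x i - s * y i)
  have hc : ∀ i n s, HasDerivAt (c i n) (-((n + 1 : ℝ) * c i (n + 1) s)) s := by
    intro i n s
    have h1 : HasDerivAt (iteratedDeriv n h) (iteratedDeriv (n + 1) h (x i - s * y i))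
        (x i - s * y i) := by
      rw [iteratedDeriv_succ]
      exact ((contDiff_iteratedDeriv hh n).differentiable (by simp) _).hasDerivAt
    have h2 : HasDerivAt (fun s : ℝ => x i - s * y i) (-(1 * y i)) s :=
      ((hasDerivAt_id s).mul_const (y i)).const_sub (x i)
    refine ((h1.comp s h2).const_mul (y i ^ n / (n.factorial : ℝ))).congr_deriv ?_
    simp only [c, Nat.factorial_succ]
    push_cast
    field_simp
    ring
  have hprod : ∀ (α : Fin d → ℕ) (s : ℝ), ∏ i, c i (α i) s =
      (∏ i, y i ^ α i) / (∏ i, ((α i).factorial : ℝ)) *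
        ∏ i, iteratedDeriv (α i) h ((x - s • y) i) := by
    intro α s
    simp [c, Finset.prod_mul_distrib, Finset.prod_div_distrib]
  have key := taylor_of_hasDerivAt
    (fun j s => ∑ α ∈ Finset.Nat.antidiagonalTuple d j, ∏ i, c i (α i) s)
    (fun j s => hasDerivAt_sum_antidiagonalTuple c hc j s) k
  simp only [hprod, Finset.mul_sum] at key
  rw [← key]
  congr 1
  · simp [Finset.Nat.antidiagonalTuple_zero_right]
  · refine Finset.sum_congr rfl fun j _ => Finset.sum_congr rfl fun α hα => ?_
    rw [Finset.Nat.mem_antidiagonalTuple] at hα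
    simp [hα]
    ring

/-- the error of the heat-kernel derivative approximation is a sum of
convolutions `D^α G(·,t) * F_α` over `|α| = k+1`. -/
theorem stmt_2 (d k : ℕ) (hd : 1 ≤ d) (u₀ : EuclideanSpace ℝ (Fin d) → ℝ)
    (hint : Integrable (fun x => u₀ x * (1 + ‖x‖ ^ (k + 1))))
    (t : ℝ) (ht : 0 < t) (x : EuclideanSpace ℝ (Fin d)) :
    (∫ y, heatKernel d (x - y) t * u₀ y) - heatApprox d k u₀ x t =
      ∑ α ∈ Finset.Nat.antidiagonalTuple d (k + 1),
        ∫ y, Dmul d α (fun z => heatKernel d z t) (x - y) * Falpha d k α u₀ y := by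
  have hG := heatKernel_eq_prod (d := d) ht
  have hg := contDiff_heatFactor t
  have hDmul : ∀ α : Fin d → ℕ, Dmul d α (fun z => heatKernel d z t) =
      fun z => ∏ i, iteratedDeriv (α i) (heatFactor t) (z i) := fun α => by
    rw [hG, Dmul_prod α _ fun _ => hg]
  have hcont : ∀ α : Fin d → ℕ, Continuous (Dmul d α (fun z => heatKernel d z t)) := by
    intro α
    rw [hDmul]
    refine continuous_finsetProd _ fun i _ => ?_
    exact (contDiff_iteratedDeriv hg _).continuous.comp (by fun_prop)
  have hbdd : ∀ α : Fin d → ℕ, ∃ C, ∀ z, |Dmul d α (fun z => heatKernel d z t) z| ≤ C := by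
    intro α
    choose C hC using exists_abs_iteratedDeriv_heatFactor_le ht
    refine ⟨∏ i, C (α i), fun z => ?_⟩
    rw [hDmul, Finset.abs_prod]
    exact Finset.prod_le_prod (fun _ _ => abs_nonneg _) fun i _ => hC _ _
  choose C hC using hbdd
  have hα : ∀ α ∈ Finset.Nat.antidiagonalTuple d (k + 1), ∑ i, α i = k + 1 :=
    fun α h => Finset.Nat.mem_antidiagonalTuple.1 h
  have hK : ∀ α ∈ Finset.Nat.antidiagonalTuple d (k + 1), Integrable (Function.uncurry
      (remainderKernel d k α (Dmul d α (fun z => heatKernel d z t)) u₀ x))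
      ((volume.restrict (Set.Ioc 0 1)).prod volume) := fun α h =>
    integrable_remainderKernel (hα α h) (hcont α) (hC α) hint x
  have hK' : ∀ α ∈ Finset.Nat.antidiagonalTuple d (k + 1), Integrable (fun y =>
      ∫ s in (0 : ℝ)..1,
        remainderKernel d k α (Dmul d α (fun z => heatKernel d z t)) u₀ x s y) := by
    intro α h
    simp_rw [intervalIntegral.integral_of_le (zero_le_one' ℝ)]
    exact (hK α h).integral_prod_right
  rw [Finset.sum_congr rfl fun α h =>
    integral_mul_Falpha (hα α h) (hcont α) (hC α) hint x, ← integral_finsetSum _ hK']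
  have hterm : ∀ j ∈ Finset.range (k + 1), ∀ α ∈ Finset.Nat.antidiagonalTuple d j,
      Integrable (fun y : EuclideanSpace ℝ (Fin d) =>
        ((-1 : ℝ) ^ (∑ i, α i) / ∏ i, ((α i).factorial : ℝ)) * ((∏ i, y i ^ α i) * u₀ y) *
          Dmul d α (fun z => heatKernel d z t) x) := by
    intro j hj α h
    rw [Finset.Nat.mem_antidiagonalTuple] at h
    rw [Finset.mem_range] at hj
    exact ((integrable_prod_pow_mul hint α (by omega)).const_mul _).mul_const _
  have happrox : heatApprox d k u₀ x t = ∫ y, ∑ j ∈ Finset.range (k + 1),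
      ∑ α ∈ Finset.Nat.antidiagonalTuple d j,
        ((-1 : ℝ) ^ (∑ i, α i) / ∏ i, ((α i).factorial : ℝ)) * ((∏ i, y i ^ α i) * u₀ y) *
          Dmul d α (fun z => heatKernel d z t) x := by
    rw [integral_finsetSum _ fun j hj => integrable_finsetSum _ (hterm j hj)]
    refine Finset.sum_congr rfl fun j hj => ?_
    rw [integral_finsetSum _ (hterm j hj)]
    refine Finset.sum_congr rfl fun α _ => ?_
    rw [integral_mul_const, integral_const_mul]
  have hconv : Integrable (fun y => heatKernel d (x - y) t * u₀ y) := by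
    have hG0 : Dmul d 0 (fun z => heatKernel d z t) = fun z => heatKernel d z t := by
      rw [hDmul, hG]
      simp
    refine integrable_mul_of_le_norm_pow hint (C := C 0) ?_ fun y => ?_
    · have := hcont 0
      rw [hG0] at this
      exact this.comp (by fun_prop)
    · have h1 := hC 0 (x - y)
      rw [hG0] at h1
      have h2 : 0 ≤ C 0 := (abs_nonneg _).trans h1
      have h3 : 0 ≤ ‖y‖ ^ (k + 1) := by positivity
      nlinarith
  rw [happrox, ← integral_sub hconv (integrable_finsetSum _ fun j hj =>
    integrable_finsetSum _ (hterm j hj))]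
  refine integral_congr_ae (ae_of_all _ fun y => ?_)
  have hT := taylor_prod (heatFactor t) hg k x y
  have hcK : ∀ α : Fin d → ℕ, Continuous (fun s =>
      remainderKernel d k α (Dmul d α (fun z => heatKernel d z t)) u₀ x s y) := by
    intro α
    have := hcont α
    unfold remainderKernel
    fun_prop
  simp only
  rw [← intervalIntegral.integral_finsetSum fun α _ => (hcK α).intervalIntegrable _ _]
  simp only [remainderKernel, ← Finset.sum_mul, hDmul]
  rw [intervalIntegral.integral_mul_const, ← hT, sub_mul, Finset.sum_mul, ← congrFun hG (x - y)]
  congr 1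
  refine Finset.sum_congr rfl fun j _ => ?_
  rw [Finset.sum_mul]
  exact Finset.sum_congr rfl fun α _ => by ring

end
end

section
/- Let d ≥ 1, let α ∈ ℕ^d be a multi-index, and let t > 0. Then sup_{x ∈ ℝ^d} |D^α_x G(x,t)| ≤ π^{−d/2} · 2^{−|α|/2 − d} · t^{−(|α|+d)/2} · √(α!) · ∏_{i=1}^d (α_i + 1)^{−1/12}. -/
open MeasureTheory Real Filter

noncomputable section

/-- The one-dimensional Gaussian profile `exp (-a y²)`. -/
def gaussProfile (a y : ℝ) : ℝ := Real.exp (-(a * y ^ 2))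

theorem contDiff_gaussProfile (a : ℝ) : ContDiff ℝ ⊤ (gaussProfile a) := by
  unfold gaussProfile
  fun_prop

theorem hasDerivAt_iteratedDeriv_gaussProfile (a : ℝ) (n : ℕ) (y : ℝ) :
    HasDerivAt (iteratedDeriv n (gaussProfile a)) (iteratedDeriv (n + 1) (gaussProfile a) y) y := by
  rw [iteratedDeriv_succ]
  have h : Differentiable ℝ (iteratedDeriv n (gaussProfile a)) :=
    (contDiff_gaussProfile a).differentiable_iteratedDeriv n (by exact WithTop.coe_lt_top _)
  exact (h y).hasDerivAt

theorem iteratedDeriv_one_gaussProfile (a y : ℝ) :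
    iteratedDeriv 1 (gaussProfile a) y = -(2 * a * y) * gaussProfile a y := by
  rw [iteratedDeriv_one]
  have h : HasDerivAt (fun y : ℝ => -(a * y ^ 2)) (-(2 * a * y)) y := by
    refine ((hasDerivAt_pow 2 y).const_mul a).fun_neg.congr_deriv ?_
    norm_num
    ring
  rw [mul_comm]
  exact h.exp.deriv

/-- The three-term recurrence of the Hermite functions `D^n exp (-a y²)`. -/
theorem iteratedDeriv_gaussProfile_add_two (a : ℝ) (n : ℕ) (y : ℝ) :
    iteratedDeriv (n + 2) (gaussProfile a) y =
      -(2 * a * y) * iteratedDeriv (n + 1) (gaussProfile a) y -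
        2 * a * (n + 1) * iteratedDeriv n (gaussProfile a) y := by
  have hlin (y : ℝ) : HasDerivAt (fun y : ℝ => -(2 * a * y)) (-(2 * a)) y := by
    simpa using ((hasDerivAt_id y).const_mul (2 * a)).fun_neg
  induction n generalizing y with
  | zero =>
    have h0 := hasDerivAt_iteratedDeriv_gaussProfile a 0 y
    have h1 := hasDerivAt_iteratedDeriv_gaussProfile a 1 y
    have e : iteratedDeriv 1 (gaussProfile a) =
        fun y => -(2 * a * y) * iteratedDeriv 0 (gaussProfile a) y := by
      funext y
      rw [iteratedDeriv_one_gaussProfile, iteratedDeriv_zero]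
    rw [e] at h1
    have := h1.unique ((hlin y).mul h0)
    simp only [zero_add, Nat.reduceAdd, Nat.cast_zero] at this ⊢
    rw [this]
    ring
  | succ n ih =>
    have h0 := hasDerivAt_iteratedDeriv_gaussProfile a n y
    have h1 := hasDerivAt_iteratedDeriv_gaussProfile a (n + 1) y
    have h2 := hasDerivAt_iteratedDeriv_gaussProfile a (n + 2) y
    rw [funext ih] at h2
    have := h2.unique (((hlin y).mul h1).sub (h0.const_mul (2 * a * (n + 1))))
    rw [show n + 1 + 2 = n + 2 + 1 by ring, this]
    push_cast
    ring

/-- Sonin's monotonicity argument: the energy `w_n² + w_{n+1}² / (2a(n+1))` of the derivatives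
`w_n` of the Gaussian profile is maximal at the origin. -/
theorem sq_iteratedDeriv_gaussProfile_le_energy_zero {a : ℝ} (ha : 0 < a) (n : ℕ) (y : ℝ) :
    iteratedDeriv n (gaussProfile a) y ^ 2 ≤
      iteratedDeriv n (gaussProfile a) 0 ^ 2 +
        iteratedDeriv (n + 1) (gaussProfile a) 0 ^ 2 / (2 * a * (n + 1)) := by
  set w := fun n => iteratedDeriv n (gaussProfile a) with hw
  let F : ℝ → ℝ := fun y => w n y ^ 2 + w (n + 1) y ^ 2 / (2 * a * (n + 1))
  have hF (y : ℝ) : HasDerivAt F (-(4 * a * w (n + 1) y ^ 2 / (2 * a * (n + 1))) * y) y := by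
    have h := ((hasDerivAt_iteratedDeriv_gaussProfile a n y).pow 2).add
      (((hasDerivAt_iteratedDeriv_gaussProfile a (n + 1) y).pow 2).div_const (2 * a * (n + 1)))
    refine h.congr_deriv ?_
    simp only [hw, iteratedDeriv_gaussProfile_add_two]
    field_simp
    ring
  have hcont : Continuous F := continuous_iff_continuousAt.2 fun y => (hF y).continuousAt
  have hcoef (y : ℝ) : 0 ≤ 4 * a * w (n + 1) y ^ 2 / (2 * a * (n + 1)) := by positivity
  have hle : F y ≤ F 0 := by
    rcases le_total 0 y with hy | hy
    · refine antitoneOn_of_deriv_nonpos (convex_Ici 0) hcont.continuousOn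
        (fun z _ => (hF z).differentiableAt.differentiableWithinAt) (fun z hz => ?_)
        Set.self_mem_Ici hy hy
      rw [interior_Ici] at hz
      rw [(hF z).deriv]
      nlinarith [mul_nonneg (hcoef z) (le_of_lt (Set.mem_Ioi.1 hz))]
    · refine monotoneOn_of_deriv_nonneg (convex_Iic 0) hcont.continuousOn
        (fun z _ => (hF z).differentiableAt.differentiableWithinAt) (fun z hz => ?_)
        hy Set.self_mem_Iic hy
      rw [interior_Iic] at hz
      rw [(hF z).deriv]
      nlinarith [mul_nonneg (hcoef z) (neg_nonneg.2 (le_of_lt (Set.mem_Iio.1 hz)))]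
  have : 0 ≤ w (n + 1) y ^ 2 / (2 * a * (n + 1)) := by positivity
  exact (le_add_of_nonneg_right this).trans hle

theorem iteratedDeriv_gaussProfile_odd_zero (a : ℝ) (m : ℕ) :
    iteratedDeriv (2 * m + 1) (gaussProfile a) 0 = 0 := by
  induction m with
  | zero => rw [mul_zero, zero_add, iteratedDeriv_one_gaussProfile, mul_zero, neg_zero, zero_mul]
  | succ m ih =>
    rw [show 2 * (m + 1) + 1 = 2 * m + 1 + 2 by ring, iteratedDeriv_gaussProfile_add_two, ih]
    ring

theorem sq_iteratedDeriv_gaussProfile_even_zero_le {a : ℝ} (ha : 0 < a) (m : ℕ) :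
    iteratedDeriv (2 * m) (gaussProfile a) 0 ^ 2 ≤
      (2 * a) ^ (2 * m) * (2 * m).factorial / √(2 * m + 1) := by
  induction m with
  | zero => simp [gaussProfile]
  | succ m ih =>
    have hs : (0 : ℝ) < √(2 * m + 1) := by positivity
    have hs' : (0 : ℝ) < √(2 * m + 3) := by positivity
    have hkey : (2 * m + 1) / √(2 * m + 1) ≤ (2 * m + 2) / √(2 * m + 3 : ℝ) := by
      rw [div_sqrt, le_div_iff₀ hs', ← Real.sqrt_mul (by positivity)]
      exact Real.sqrt_le_iff.2 ⟨by positivity, by nlinarith⟩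
    rw [show 2 * (m + 1) = 2 * m + 2 by ring, iteratedDeriv_gaussProfile_add_two,
      Nat.factorial_succ, Nat.factorial_succ]
    push_cast
    calc (-(2 * a * 0) * iteratedDeriv (2 * m + 1) (gaussProfile a) 0 -
            2 * a * (2 * m + 1) * iteratedDeriv (2 * m) (gaussProfile a) 0) ^ 2
        = (2 * a * (2 * m + 1)) ^ 2 * iteratedDeriv (2 * m) (gaussProfile a) 0 ^ 2 := by ring
      _ ≤ (2 * a * (2 * m + 1)) ^ 2 *
            ((2 * a) ^ (2 * m) * (2 * m).factorial / √(2 * m + 1)) := by gcongr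
      _ = (2 * a) ^ (2 * m + 2) * (2 * m + 1) * (2 * m).factorial *
            ((2 * m + 1) / √(2 * m + 1)) := by ring
      _ ≤ (2 * a) ^ (2 * m + 2) * (2 * m + 1) * (2 * m).factorial *
            ((2 * m + 2) / √(2 * m + 3)) := by gcongr
      _ = _ := by
        rw [show (2 * ((m : ℝ) + 1) + 1) = 2 * m + 3 by ring]
        ring

theorem sq_iteratedDeriv_gaussProfile_le {a : ℝ} (ha : 0 < a) (n : ℕ) (y : ℝ) :
    iteratedDeriv n (gaussProfile a) y ^ 2 ≤ (2 * a) ^ n * n.factorial / √(n + 1) := by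
  refine (sq_iteratedDeriv_gaussProfile_le_energy_zero ha n y).trans ?_
  rcases Nat.even_or_odd' n with ⟨m, rfl | rfl⟩
  · rw [iteratedDeriv_gaussProfile_odd_zero]
    simpa using sq_iteratedDeriv_gaussProfile_even_zero_le ha m
  · rw [iteratedDeriv_gaussProfile_odd_zero]
    have h := sq_iteratedDeriv_gaussProfile_even_zero_le ha (m + 1)
    have hpos : (0 : ℝ) < 2 * a * ((2 * m + 1 : ℕ) + 1) := by positivity
    have hmono : √((2 * m + 1 : ℕ) + 1 : ℝ) ≤ √(2 * (m + 1 : ℕ) + 1) := by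
      apply Real.sqrt_le_sqrt
      push_cast
      linarith
    rw [zero_pow two_ne_zero, zero_add, div_le_iff₀ hpos]
    refine h.trans ?_
    calc (2 * a) ^ (2 * (m + 1)) * (2 * (m + 1)).factorial / √(2 * (m + 1 : ℕ) + 1)
        ≤ (2 * a) ^ (2 * (m + 1)) * (2 * (m + 1)).factorial / √((2 * m + 1 : ℕ) + 1) := by gcongr
      _ = _ := by
        rw [show 2 * (m + 1) = 2 * m + 1 + 1 by ring, Nat.factorial_succ, pow_succ]
        push_cast
        ring

theorem abs_iteratedDeriv_gaussProfile_le {a : ℝ} (ha : 0 < a) (n : ℕ) (y : ℝ) :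
    |iteratedDeriv n (gaussProfile a) y| ≤
      (2 * a) ^ ((n : ℝ) / 2) * √n.factorial * ((n : ℝ) + 1) ^ (-(1 / 12 : ℝ)) := by
  have hn : (1 : ℝ) ≤ n + 1 := by linarith [n.cast_nonneg (α := ℝ)]
  refine abs_le_of_sq_le_sq ?_ (by positivity)
  refine (sq_iteratedDeriv_gaussProfile_le ha n y).trans ?_
  have hpow : ((2 * a) ^ ((n : ℝ) / 2)) ^ 2 = (2 * a) ^ n := by
    rw [← Real.rpow_mul_natCast (by positivity), ← Real.rpow_natCast]
    congr 1
    push_cast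
    ring
  have hexp : (√(n + 1 : ℝ))⁻¹ ≤ (((n : ℝ) + 1) ^ (-(1 / 12 : ℝ))) ^ 2 := by
    rw [← Real.rpow_mul_natCast (by positivity), Real.sqrt_eq_rpow,
      ← Real.rpow_neg (by positivity)]
    exact Real.rpow_le_rpow_of_exponent_le hn (by norm_num)
  rw [mul_pow (_ * _), mul_pow (_ ^ _), hpow, Real.sq_sqrt (by positivity), div_eq_mul_inv]
  gcongr

theorem pd_const_mul_prod_gaussProfile {d : ℕ} (C a : ℝ) (β : Fin d → ℕ) (i : Fin d) :
    pd d i (fun x => C * ∏ j, iteratedDeriv (β j) (gaussProfile a) (x j)) =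
      fun x => C * ∏ j, iteratedDeriv ((β + Pi.single i 1 : Fin d → ℕ) j) (gaussProfile a) (x j) := by
  funext x
  have hcoord (j : Fin d) : HasFDerivAt
      (fun x : EuclideanSpace ℝ (Fin d) => iteratedDeriv (β j) (gaussProfile a) (x j))
      (iteratedDeriv (β j + 1) (gaussProfile a) (x j) •
        (EuclideanSpace.proj j : EuclideanSpace ℝ (Fin d) →L[ℝ] ℝ)) x :=
    HasDerivAt.comp_hasFDerivAt (f := fun x : EuclideanSpace ℝ (Fin d) => x j) x
      (hasDerivAt_iteratedDeriv_gaussProfile a (β j) (x j))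
      (EuclideanSpace.proj j : EuclideanSpace ℝ (Fin d) →L[ℝ] ℝ).hasFDerivAt
  have h := (HasFDerivAt.finsetProd (u := Finset.univ) fun j _ => hcoord j).const_mul C
  rw [pd, h.fderiv, ← Finset.mul_prod_erase _ _ (Finset.mem_univ i)]
  simp only [smul_apply, sum_apply, smul_eq_mul, PiLp.proj_apply, PiLp.single_apply]
  rw [Finset.sum_eq_single i (fun j _ hj => by simp [hj]) (by simp)]
  have hprod : ∏ j ∈ Finset.univ.erase i,
      iteratedDeriv ((β + Pi.single i 1 : Fin d → ℕ) j) (gaussProfile a) (x j) =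
        ∏ j ∈ Finset.univ.erase i, iteratedDeriv (β j) (gaussProfile a) (x j) :=
    Finset.prod_congr rfl fun j hj => by simp [Finset.ne_of_mem_erase hj]
  rw [hprod]
  simp only [reduceIte, mul_one, Pi.add_apply, Pi.single_eq_same]
  ring

theorem pd_iterate_const_mul_prod_gaussProfile {d : ℕ} (C a : ℝ) (β : Fin d → ℕ) (i : Fin d)
    (k : ℕ) :
    (pd d i)^[k] (fun x => C * ∏ j, iteratedDeriv (β j) (gaussProfile a) (x j)) =
      fun x => C * ∏ j, iteratedDeriv ((β + Pi.single i k : Fin d → ℕ) j) (gaussProfile a) (x j) := by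
  induction k with
  | zero => simp
  | succ k ih =>
    rw [Function.iterate_succ_apply', ih, pd_const_mul_prod_gaussProfile, add_assoc,
      ← Pi.single_add]

theorem Dmul_const_mul_prod_gaussProfile {d : ℕ} (C a : ℝ) (α : Fin d → ℕ) :
    Dmul d α (fun x => C * ∏ j, gaussProfile a (x j)) =
      fun x => C * ∏ j, iteratedDeriv (α j) (gaussProfile a) (x j) := by
  have hfold (l : List (Fin d)) :
      (l.map fun i => (pd d i)^[α i]).foldr (· ∘ ·) id
          (fun x => C * ∏ j, iteratedDeriv 0 (gaussProfile a) (x j)) =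
        fun x => C * ∏ j, iteratedDeriv ((l.map fun i => Pi.single i (α i)).sum j)
          (gaussProfile a) (x j) := by
    induction l with
    | nil => simp
    | cons i l ih =>
      simp only [List.map_cons, List.foldr_cons, Function.comp_apply, List.sum_cons]
      rw [ih, pd_iterate_const_mul_prod_gaussProfile, add_comm]
  have hsum : ((List.finRange d).map fun i => Pi.single i (α i)).sum = α := by
    rw [← List.ofFn_eq_map, List.sum_ofFn, Finset.univ_sum_single]
  have h := hfold (List.finRange d)
  simp only [hsum, iteratedDeriv_zero] at h
  exact h

theorem heatKernel_eq_prod_gaussProfile {d : ℕ} (t : ℝ) (x : EuclideanSpace ℝ (Fin d)) :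
    heatKernel d x t = (4 * π * t) ^ (-(d : ℝ) / 2) * ∏ j, gaussProfile (1 / (4 * t)) (x j) := by
  simp only [heatKernel, gaussProfile]
  rw [← Real.exp_sum, EuclideanSpace.real_norm_sq_eq, Finset.sum_neg_distrib, ← Finset.mul_sum]
  congr 2
  ring

/-- uniform bound on `D^α_x G(x,t)`. -/
theorem stmt_4 (d : ℕ) (hd : 1 ≤ d) (α : Fin d → ℕ) (t : ℝ) (ht : 0 < t)
    (x : EuclideanSpace ℝ (Fin d)) :
    |Dmul d α (fun z => heatKernel d z t) x| ≤
      π ^ (-(d : ℝ) / 2) * 2 ^ (-((∑ i, α i : ℕ) : ℝ) / 2 - d) *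
        t ^ (-(((∑ i, α i : ℕ) : ℝ) + d) / 2) *
        Real.sqrt (∏ i, ((α i).factorial : ℝ)) *
        ∏ i, ((α i : ℝ) + 1) ^ (-(1 / 12 : ℝ)) := by
  simp only [heatKernel_eq_prod_gaussProfile]
  rw [Dmul_const_mul_prod_gaussProfile, abs_mul, Finset.abs_prod, abs_of_nonneg (by positivity)]
  have hpi := pi_pos
  have hprod : ∏ j, |iteratedDeriv (α j) (gaussProfile (1 / (4 * t))) (x j)| ≤
      (2 * (1 / (4 * t))) ^ (((∑ i, α i : ℕ) : ℝ) / 2) *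
        √(∏ i, ((α i).factorial : ℝ)) * ∏ i, ((α i : ℝ) + 1) ^ (-(1 / 12 : ℝ)) := by
    refine (Finset.prod_le_prod (fun _ _ => abs_nonneg _) fun j _ =>
      abs_iteratedDeriv_gaussProfile_le (by positivity) (α j) (x j)).trans_eq ?_
    rw [Finset.prod_mul_distrib, Finset.prod_mul_distrib,
      ← Real.rpow_sum_of_pos (by positivity), ← Finset.sum_div, Nat.cast_sum,
      Real.sqrt_prod _ fun _ _ => by positivity]
  have hconst : (4 * π * t) ^ (-(d : ℝ) / 2) *
      (2 * (1 / (4 * t))) ^ (((∑ i, α i : ℕ) : ℝ) / 2) =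
        π ^ (-(d : ℝ) / 2) * 2 ^ (-((∑ i, α i : ℕ) : ℝ) / 2 - d) *
          t ^ (-(((∑ i, α i : ℕ) : ℝ) + d) / 2) := by
    generalize ((∑ i, α i : ℕ) : ℝ) = s
    rw [show 2 * (1 / (4 * t)) = (2 * t)⁻¹ by field_simp; norm_num,
      Real.inv_rpow (by positivity), ← Real.rpow_neg (by positivity),
      Real.mul_rpow (by positivity) ht.le, Real.mul_rpow (by positivity) hpi.le,
      Real.mul_rpow (by positivity) ht.le, show (4 : ℝ) = 2 ^ (2 : ℝ) by norm_num,
      ← Real.rpow_mul (by positivity),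
      show -s / 2 - d = 2 * (-(d : ℝ) / 2) + -(s / 2) by ring,
      show -(s + d) / 2 = -(d : ℝ) / 2 + -(s / 2) by ring,
      Real.rpow_add two_pos, Real.rpow_add ht]
    ring
  refine (mul_le_mul_of_nonneg_left hprod (by positivity)).trans_eq ?_
  rw [← mul_assoc, ← mul_assoc, hconst]
end
end

section
/- Let d ≥ 1 and k ≥ 0 be integers, let C > 0, t₀ > 0, and let u₀ : ℝ^d → ℝ be measurable with |u₀(x)| ≤ C e^{−|x|²/(4t₀)} for almost every x. Let u(x,t) := (G(·,t) * u₀)(x) and let u_k be the heat-kernel derivative approximation of order k built from u₀. Then for every t > 0, sup_{x ∈ ℝ^d} |u(x,t) − u_k(x,t)| ≤ C (t₀/t)^{(k+d+1)/2} (1 + (k+1)/d)^{−d/12} · (k+d)! / ((k+1)! (d−1)!). -/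
open MeasureTheory Real Filter

noncomputable section

open scoped ContDiff FourierTransform

/-- One-dimensional case of the Beta-function bound. -/
theorem rpow_mul_Gamma_le_one_dim (n : ℕ) :
    (1 + (n : ℝ)) ^ (1 / 12 : ℝ) * Gamma (((n : ℝ) + 1) / 2) ≤ √π * Gamma ((n : ℝ) / 2 + 1) := by
  induction n using Nat.twoStepInduction with
  | zero => simpa using Gamma_one_half_eq.le
  | one =>
    have h : Gamma ((1 : ℝ) / 2 + 1) = 1 / 2 * √π := by
      rw [Gamma_add_one (by norm_num), Gamma_one_half_eq]
    have h2 : (2 : ℝ) ^ (1 / 12 : ℝ) ≤ 3 / 2 := by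
      rw [← Real.rpow_le_rpow_iff (z := 12) (by positivity) (by positivity) (by norm_num),
        ← Real.rpow_mul (by norm_num)]
      norm_num
    push_cast
    rw [h, show ((1 : ℝ) + 1) / 2 = 1 by norm_num, Gamma_one, mul_one,
      show (1 : ℝ) + 1 = 2 by norm_num]
    nlinarith [pi_gt_three, Real.mul_self_sqrt pi_pos.le]
  | more n ih _ =>
    have hG1 : Gamma ((((n + 2 : ℕ) : ℝ) + 1) / 2)
        = ((n : ℝ) + 1) / 2 * Gamma (((n : ℝ) + 1) / 2) := by
      rw [← Gamma_add_one (by positivity)]; congr 1; push_cast; ring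
    have hG2 : Gamma (((n + 2 : ℕ) : ℝ) / 2 + 1)
        = ((n : ℝ) / 2 + 1) * Gamma ((n : ℝ) / 2 + 1) := by
      rw [← Gamma_add_one (by positivity)]; congr 1; push_cast; ring
    have key : (1 + ((n + 2 : ℕ) : ℝ)) ^ (1 / 12 : ℝ) * (((n : ℝ) + 1) / 2)
        ≤ (1 + (n : ℝ)) ^ (1 / 12 : ℝ) * ((n : ℝ) / 2 + 1) := by
      have hq : 1 + ((n + 2 : ℕ) : ℝ) ≤ (1 + (n : ℝ)) * (((n : ℝ) + 2) / (n + 1)) ^ (12 : ℝ) := by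
        have h1 : (1 : ℝ) ≤ ((n : ℝ) + 2) / (n + 1) := by
          rw [le_div_iff₀ (by positivity)]; linarith
        have h2 : (((n : ℝ) + 2) / (n + 1)) ^ 2 ≤ (((n : ℝ) + 2) / (n + 1)) ^ (12 : ℝ) := by
          rw [← Real.rpow_natCast]
          exact Real.rpow_le_rpow_of_exponent_le h1 (by norm_num)
        refine le_trans ?_ (mul_le_mul_of_nonneg_left h2 (by positivity))
        rw [div_pow, mul_div_assoc', le_div_iff₀ (by positivity)]
        push_cast
        nlinarith [(n.cast_nonneg : (0 : ℝ) ≤ n)]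
      have h3 := Real.rpow_le_rpow (by positivity) hq (by norm_num : (0 : ℝ) ≤ 1 / 12)
      rw [Real.mul_rpow (by positivity) (by positivity), ← Real.rpow_mul (by positivity)] at h3
      norm_num at h3
      have h4 := mul_le_mul_of_nonneg_right h3 (by positivity : 0 ≤ ((n : ℝ) + 1) / 2)
      push_cast
      refine (by simpa using h4 : _ ≤ _).trans_eq ?_
      field_simp
    rw [hG1, hG2]
    calc _ = ((1 + ((n + 2 : ℕ) : ℝ)) ^ (1 / 12 : ℝ) * (((n : ℝ) + 1) / 2)) *
          Gamma (((n : ℝ) + 1) / 2) := by ring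
      _ ≤ ((1 + (n : ℝ)) ^ (1 / 12 : ℝ) * ((n : ℝ) / 2 + 1)) * Gamma (((n : ℝ) + 1) / 2) :=
          mul_le_mul_of_nonneg_right key (Gamma_pos_of_pos (by positivity)).le
      _ = ((n : ℝ) / 2 + 1) * ((1 + (n : ℝ)) ^ (1 / 12 : ℝ) * Gamma (((n : ℝ) + 1) / 2)) := by ring
      _ ≤ ((n : ℝ) / 2 + 1) * (√π * Gamma ((n : ℝ) / 2 + 1)) :=
          mul_le_mul_of_nonneg_left ih (by positivity)
      _ = _ := by ring

theorem rpow_mul_Gamma_le (n d : ℕ) :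
    (1 + (n : ℝ) / d) ^ ((d : ℝ) / 12) * (Gamma (((n : ℝ) + 1) / 2) * Gamma (((d : ℝ) + 1) / 2))
      ≤ √π * Gamma (((n : ℝ) + d + 1) / 2) := by
  induction d using Nat.twoStepInduction with
  | zero =>
    have h : Gamma (2⁻¹ : ℝ) = √π := by simpa using Gamma_one_half_eq
    simp [h, mul_comm]
  | one =>
    have h := rpow_mul_Gamma_le_one_dim n
    rw [show (n : ℝ) / 2 + 1 = ((n : ℝ) + (1 : ℕ) + 1) / 2 by push_cast; ring] at h
    simpa using h
  | more d ih _ =>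
    have hG1 : Gamma ((((d + 2 : ℕ) : ℝ) + 1) / 2)
        = ((d : ℝ) + 1) / 2 * Gamma (((d : ℝ) + 1) / 2) := by
      rw [← Gamma_add_one (by positivity)]; congr 1; push_cast; ring
    have hG2 : Gamma (((n : ℝ) + (d + 2 : ℕ) + 1) / 2)
        = (((n : ℝ) + d + 1) / 2) * Gamma (((n : ℝ) + d + 1) / 2) := by
      rw [← Gamma_add_one (by positivity)]; congr 1; push_cast; ring
    have key : (1 + (n : ℝ) / (d + 2 : ℕ)) ^ (((d + 2 : ℕ) : ℝ) / 12) * (((d : ℝ) + 1) / 2)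
        ≤ (1 + (n : ℝ) / d) ^ ((d : ℝ) / 12) * (((n : ℝ) + d + 1) / 2) := by
      have hb : (1 : ℝ) ≤ 1 + (n : ℝ) / (d + 2 : ℕ) := by
        have : 0 ≤ (n : ℝ) / (d + 2 : ℕ) := by positivity
        linarith
      have h1 : (1 + (n : ℝ) / (d + 2 : ℕ)) ^ ((d : ℝ) / 12) ≤ (1 + (n : ℝ) / d) ^ ((d : ℝ) / 12) := by
        rcases d.eq_zero_or_pos with rfl | hd
        · simp
        · apply Real.rpow_le_rpow (by positivity) _ (by positivity)
          gcongr
          omega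
      have h2 : (1 + (n : ℝ) / (d + 2 : ℕ)) ^ ((1 : ℝ) / 6) * (((d : ℝ) + 1) / 2)
          ≤ ((n : ℝ) + d + 1) / 2 := by
        have h3 : (1 + (n : ℝ) / (d + 2 : ℕ)) ^ ((1 : ℝ) / 6) ≤ 1 + (n : ℝ) / (d + 2 : ℕ) :=
          (Real.rpow_le_rpow_of_exponent_le hb (by norm_num)).trans_eq (Real.rpow_one _)
        have h4 : (n : ℝ) / (d + 2 : ℕ) ≤ (n : ℝ) / (d + 1) := by
          gcongr
          push_cast; linarith
        calc _ ≤ (1 + (n : ℝ) / (d + 1)) * (((d : ℝ) + 1) / 2) := by gcongr; linarith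
          _ = _ := by field_simp; ring
      rw [show ((d + 2 : ℕ) : ℝ) / 12 = (d : ℝ) / 12 + 1 / 6 by push_cast; ring,
        Real.rpow_add (by positivity), mul_assoc]
      exact mul_le_mul h1 h2 (by positivity) (by positivity)
    have hp : 0 < Gamma (((n : ℝ) + 1) / 2) * Gamma (((d : ℝ) + 1) / 2) :=
      mul_pos (Gamma_pos_of_pos (by positivity)) (Gamma_pos_of_pos (by positivity))
    rw [hG1, hG2]
    calc _ = ((1 + (n : ℝ) / (d + 2 : ℕ)) ^ (((d + 2 : ℕ) : ℝ) / 12) * (((d : ℝ) + 1) / 2)) *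
          (Gamma (((n : ℝ) + 1) / 2) * Gamma (((d : ℝ) + 1) / 2)) := by ring
      _ ≤ ((1 + (n : ℝ) / d) ^ ((d : ℝ) / 12) * (((n : ℝ) + d + 1) / 2)) *
          (Gamma (((n : ℝ) + 1) / 2) * Gamma (((d : ℝ) + 1) / 2)) :=
          mul_le_mul_of_nonneg_right key hp.le
      _ = (((n : ℝ) + d + 1) / 2) * ((1 + (n : ℝ) / d) ^ ((d : ℝ) / 12) *
          (Gamma (((n : ℝ) + 1) / 2) * Gamma (((d : ℝ) + 1) / 2))) := by ring
      _ ≤ (((n : ℝ) + d + 1) / 2) * (√π * Gamma (((n : ℝ) + d + 1) / 2)) :=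
          mul_le_mul_of_nonneg_left ih (by positivity)
      _ = _ := by ring

/-- Comparison of the sharp Gamma-function constant with the binomial one. -/
theorem gamma_const_le (n d : ℕ) (hd : 1 ≤ d) :
    2 ^ n / √π * Gamma (((n : ℝ) + 1) / 2) * Gamma (((n : ℝ) + d) / 2) / Gamma ((d : ℝ) / 2)
      ≤ (1 + (n : ℝ) / d) ^ (-(d : ℝ) / 12) * ((n + d - 1).factorial / (d - 1).factorial) := by
  have hd0 : (0 : ℝ) < d := by exact_mod_cast hd
  have h1 : ((n + d - 1).factorial : ℝ) * √π =
      Gamma (((n : ℝ) + d) / 2) * Gamma (((n : ℝ) + d + 1) / 2) * (2 ^ n * 2 ^ (d - 1)) := by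
    have := Real.Gamma_mul_Gamma_add_half (((n : ℝ) + d) / 2)
    rw [show ((n : ℝ) + d) / 2 + 1 / 2 = ((n : ℝ) + d + 1) / 2 by ring] at this
    rw [this, show 2 * (((n : ℝ) + d) / 2) = ((n + d - 1 : ℕ) : ℝ) + 1 by
      rw [Nat.cast_sub (by omega)]; push_cast; ring, Gamma_nat_eq_factorial,
      show 1 - (((n + d - 1 : ℕ) : ℝ) + 1) = -((n + d - 1 : ℕ) : ℝ) by ring,
      Real.rpow_neg (by norm_num), Real.rpow_natCast, ← pow_add, Nat.add_sub_assoc hd]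
    field_simp
  have h2 : ((d - 1).factorial : ℝ) * √π =
      Gamma ((d : ℝ) / 2) * Gamma (((d : ℝ) + 1) / 2) * 2 ^ (d - 1) := by
    have := Real.Gamma_mul_Gamma_add_half ((d : ℝ) / 2)
    rw [show (d : ℝ) / 2 + 1 / 2 = ((d : ℝ) + 1) / 2 by ring] at this
    rw [this, show 2 * ((d : ℝ) / 2) = ((d - 1 : ℕ) : ℝ) + 1 by
      rw [Nat.cast_sub hd]; push_cast; ring, Gamma_nat_eq_factorial,
      show 1 - (((d - 1 : ℕ) : ℝ) + 1) = -((d - 1 : ℕ) : ℝ) by ring,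
      Real.rpow_neg (by norm_num), Real.rpow_natCast]
    field_simp
  have hπ : 0 < √π := Real.sqrt_pos.mpr pi_pos
  have ga := Gamma_pos_of_pos (show 0 < ((n : ℝ) + 1) / 2 by positivity)
  have gb := Gamma_pos_of_pos (show 0 < ((n : ℝ) + d) / 2 by positivity)
  have gc := Gamma_pos_of_pos (show 0 < (d : ℝ) / 2 by positivity)
  have gd := Gamma_pos_of_pos (show 0 < ((d : ℝ) + 1) / 2 by positivity)
  have hr := rpow_mul_Gamma_le n d
  have hfac : ((n + d - 1).factorial : ℝ) / (d - 1).factorial =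
      Gamma (((n : ℝ) + d) / 2) * Gamma (((n : ℝ) + d + 1) / 2) * 2 ^ n /
        (Gamma ((d : ℝ) / 2) * Gamma (((d : ℝ) + 1) / 2)) := by
    rw [← mul_div_mul_right _ _ hπ.ne', h1, h2]
    field_simp
  rw [hfac, neg_div, Real.rpow_neg (by positivity)]
  have hw : 0 < (1 + (n : ℝ) / d) ^ ((d : ℝ) / 12) := by positivity
  set w := (1 + (n : ℝ) / d) ^ ((d : ℝ) / 12)
  rw [inv_mul_eq_div, div_div, div_le_div_iff₀ gc (by positivity)]
  have : 0 ≤ Gamma (((n : ℝ) + d) / 2) * Gamma ((d : ℝ) / 2) * 2 ^ n / √π := by positivity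
  have h5 := mul_le_mul_of_nonneg_left hr this
  calc _ = _ := by ring
    _ ≤ _ := h5
    _ = _ := by field_simp

theorem pd_mul_prod {d : ℕ} (i : Fin d) (c : ℝ) (h : Fin d → ℝ → ℝ)
    (hh : ∀ j, Differentiable ℝ (h j)) :
    pd d i (fun z => c * ∏ j, h j (z j)) =
      fun z => c * ∏ j, Function.update h i (deriv (h i)) j (z j) := by
  funext z
  have hcoord : ∀ j, HasFDerivAt (fun w : EuclideanSpace ℝ (Fin d) => w j)
      (EuclideanSpace.proj j : EuclideanSpace ℝ (Fin d) →L[ℝ] ℝ) z :=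
    fun j => (EuclideanSpace.proj j : EuclideanSpace ℝ (Fin d) →L[ℝ] ℝ).hasFDerivAt
  have hcomp : ∀ j ∈ (Finset.univ : Finset (Fin d)),
      HasFDerivAt (fun w : EuclideanSpace ℝ (Fin d) => h j (w j))
        (deriv (h j) (z j) • (EuclideanSpace.proj j : EuclideanSpace ℝ (Fin d) →L[ℝ] ℝ)) z :=
    fun j _ => (hh j (z j)).hasDerivAt.comp_hasFDerivAt z (hcoord j)
  have hder := (HasFDerivAt.finsetProd hcomp).const_mul c
  have hproj : ∀ j, (EuclideanSpace.proj j : EuclideanSpace ℝ (Fin d) →L[ℝ] ℝ)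
      (EuclideanSpace.single i 1) = if j = i then 1 else 0 := by
    intro j
    simp
  rw [pd, hder.fderiv]
  simp only [smul_apply, sum_apply, smul_eq_mul, hproj]
  rw [Finset.sum_eq_single i (by intro j _ hj; simp [hj]) (by simp)]
  rw [← Finset.prod_erase_mul _ _ (Finset.mem_univ i)]
  simp only [Function.update_self, if_true, mul_one]
  congr 2
  refine Finset.prod_congr rfl fun j hj => ?_
  rw [Function.update_of_ne (Finset.ne_of_mem_erase hj)]

theorem contDiff_infty_iteratedDeriv {f : ℝ → ℝ} (hf : ContDiff ℝ ∞ f) (n : ℕ) :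
    ContDiff ℝ ∞ (iteratedDeriv n f) := by
  rw [iteratedDeriv_eq_iterate]
  exact hf.iterate_deriv n

theorem pd_iterate_mul_prod {d : ℕ} (i : Fin d) (c : ℝ) (h : Fin d → ℝ → ℝ)
    (hh : ∀ j, ContDiff ℝ ∞ (h j)) (n : ℕ) :
    (pd d i)^[n] (fun z => c * ∏ j, h j (z j)) =
      fun z => c * ∏ j, Function.update h i (iteratedDeriv n (h i)) j (z j) := by
  induction n with
  | zero => simp
  | succ n ih =>
    rw [Function.iterate_succ_apply', ih, pd_mul_prod]
    · simp [iteratedDeriv_succ]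
    · intro j
      rcases eq_or_ne j i with rfl | hj
      · rw [Function.update_self]
        exact (contDiff_infty_iteratedDeriv (hh j) n).differentiable (by simp)
      · rw [Function.update_of_ne hj]
        exact (hh j).differentiable (by simp)

theorem foldr_pd_mul_prod {d : ℕ} (α : Fin d → ℕ) (c : ℝ) (h : Fin d → ℝ → ℝ)
    (hh : ∀ j, ContDiff ℝ ∞ (h j)) (l : List (Fin d)) (hl : l.Nodup) :
    (l.map (fun i => (pd d i)^[α i])).foldr (· ∘ ·) id (fun z => c * ∏ j, h j (z j)) =
      fun z => c * ∏ j, (if j ∈ l then iteratedDeriv (α j) (h j) else h j) (z j) := by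
  induction l with
  | nil => simp
  | cons i l ih =>
    rw [List.nodup_cons] at hl
    rw [List.map_cons, List.foldr_cons, Function.comp_apply, ih hl.2, pd_iterate_mul_prod]
    · funext z
      congr 1
      refine Finset.prod_congr rfl fun j _ => ?_
      rcases eq_or_ne j i with rfl | hj
      · simp [hl.1]
      · simp [hj]
    · intro j
      split_ifs
      · exact contDiff_infty_iteratedDeriv (hh j) _
      · exact hh j

/-- Mixed partial derivatives of a product of one-variable functions. -/
theorem Dmul_mul_prod {d : ℕ} (α : Fin d → ℕ) (c : ℝ) (h : Fin d → ℝ → ℝ)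
    (hh : ∀ j, ContDiff ℝ ∞ (h j)) :
    Dmul d α (fun z => c * ∏ j, h j (z j)) =
      fun z => c * ∏ j, iteratedDeriv (α j) (h j) (z j) := by
  rw [Dmul, foldr_pd_mul_prod α c h hh _ (List.nodup_finRange d)]
  simp

/-- The general Leibniz rule for a product of `d` functions, with derivatives divided by
factorials. -/
theorem iteratedDeriv_prod_div_factorial {d : ℕ} (f : Fin d → ℝ → ℝ)
    (hf : ∀ i, ContDiff ℝ ∞ (f i)) (x : ℝ) (n : ℕ) :
    iteratedDeriv n (fun s => ∏ i, f i s) x / n.factorial =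
      ∑ α ∈ Finset.Nat.antidiagonalTuple d n,
        ∏ i, iteratedDeriv (α i) (f i) x / (α i).factorial := by
  induction d generalizing n with
  | zero =>
    cases n with
    | zero => simp
    | succ n => simp [iteratedDeriv_const]
  | succ d ih =>
    have hsplit : ∑ α ∈ Finset.Nat.antidiagonalTuple (d + 1) n,
        ∏ i, iteratedDeriv (α i) (f i) x / ((α i).factorial : ℝ) =
        ∑ p ∈ Finset.HasAntidiagonal.antidiagonal n, ∑ β ∈ Finset.Nat.antidiagonalTuple d p.2,
          ∏ i, iteratedDeriv ((Fin.cons p.1 β : Fin (d + 1) → ℕ) i) (f i) x /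
            (((Fin.cons p.1 β : Fin (d + 1) → ℕ) i).factorial : ℝ) := by
      rw [Finset.sum_sigma']
      refine Finset.sum_bij' (fun α _ => ⟨(α 0, ∑ i, Fin.tail α i), Fin.tail α⟩)
        (fun q _ => Fin.cons q.1.1 q.2) ?_ ?_ ?_ ?_ ?_
      · intro α hα
        rw [Finset.Nat.mem_antidiagonalTuple, Fin.sum_univ_succ] at hα
        simp [Finset.Nat.mem_antidiagonalTuple, ← hα, Fin.tail]
      · rintro ⟨⟨a, b⟩, β⟩ hq
        simp only [Finset.mem_sigma, Finset.HasAntidiagonal.mem_antidiagonal,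
          Finset.Nat.mem_antidiagonalTuple] at hq
        simp [Finset.Nat.mem_antidiagonalTuple, Fin.sum_univ_succ, hq.2, hq.1]
      · intro α _
        simp
      · rintro ⟨⟨a, b⟩, β⟩ hq
        simp only [Finset.mem_sigma, Finset.Nat.mem_antidiagonalTuple] at hq
        simp [hq.2]
      · intro α _
        simp
    rw [hsplit]
    simp only [Fin.prod_univ_succ, Fin.cons_zero, Fin.cons_succ, ← Finset.mul_sum]
    simp only [← ih (fun i => f i.succ) (fun i => hf i.succ)]
    have hprod : ContDiff ℝ ∞ (fun s => ∏ i : Fin d, f i.succ s) :=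
      contDiff_prod fun i _ => hf i.succ
    rw [iteratedDeriv_fun_mul ((hf 0).contDiffAt.of_le (by exact_mod_cast le_top))
      (hprod.contDiffAt.of_le (by exact_mod_cast le_top)), Finset.sum_div,
      Finset.Nat.sum_antidiagonal_eq_sum_range_succ_mk]
    refine Finset.sum_congr rfl fun i hi => ?_
    have hi' : i ≤ n := Nat.lt_succ_iff.mp (Finset.mem_range.mp hi)
    rw [Nat.cast_choose ℝ hi']
    field_simp

theorem iteratedDeriv_ofReal_comp {f : ℝ → ℝ} (hf : ContDiff ℝ ∞ f) (n : ℕ) :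
    iteratedDeriv n (fun x => (f x : ℂ)) = fun x => ((iteratedDeriv n f x : ℝ) : ℂ) := by
  induction n with
  | zero => simp
  | succ n ih =>
    rw [iteratedDeriv_succ, ih]
    funext x
    rw [iteratedDeriv_succ]
    exact ((contDiff_infty_iteratedDeriv hf n).differentiable (by simp) x).hasDerivAt.ofReal_comp.deriv

theorem integral_abs_pow_mul_exp_neg_pi_sq (n : ℕ) :
    ∫ v : ℝ, |v| ^ n * rexp (-π * v ^ 2) =
      π ^ (-((n : ℝ) + 1) / 2) * Gamma (((n : ℝ) + 1) / 2) := by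
  have h1 := integral_comp_abs (f := fun v : ℝ => v ^ n * rexp (-π * v ^ 2))
  simp only [sq_abs] at h1
  have h2 := integral_rpow_mul_exp_neg_mul_rpow (p := 2) (q := n) (b := π) (by norm_num)
    (by linarith [(n.cast_nonneg : (0 : ℝ) ≤ n)]) pi_pos
  simp only [Real.rpow_natCast, Real.rpow_ofNat] at h2
  rw [h1, h2]
  ring

theorem contDiff_exp_neg_pi_sq : ContDiff ℝ ∞ (fun v : ℝ => rexp (-π * v ^ 2)) := by
  fun_prop

/-- Uniform bound on the derivatives of the Gaussian, obtained from its Fourier representation. -/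
theorem abs_iteratedDeriv_exp_neg_pi_sq_le (n : ℕ) (z : ℝ) :
    |iteratedDeriv n (fun v : ℝ => rexp (-π * v ^ 2)) z| ≤
      (2 * π) ^ n * (π ^ (-((n : ℝ) + 1) / 2) * Gamma (((n : ℝ) + 1) / 2)) := by
  have hF : 𝓕 (fun x : ℝ => ((rexp (-π * x ^ 2) : ℝ) : ℂ)) =
      fun x : ℝ => ((rexp (-π * x ^ 2) : ℝ) : ℂ) := by
    have := fourier_gaussian_pi (b := 1) (by simp)
    simpa using this
  have hint : ∀ m : ℕ, Integrable (fun x : ℝ => x ^ m • ((rexp (-π * x ^ 2) : ℝ) : ℂ)) := by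
    intro m
    have := (integrable_rpow_mul_exp_neg_mul_sq pi_pos (s := m)
      (by linarith [(m.cast_nonneg : (0 : ℝ) ≤ m)])).ofReal (𝕜 := ℂ)
    simpa [Real.rpow_natCast] using this
  have hD := iteratedDeriv_fourier (f := fun x : ℝ => ((rexp (-π * x ^ 2) : ℝ) : ℂ)) (N := ⊤)
    (n := n) (fun m _ => hint m) le_top
  rw [hF, iteratedDeriv_ofReal_comp contDiff_exp_neg_pi_sq] at hD
  have hz := congrFun hD z
  rw [← integral_abs_pow_mul_exp_neg_pi_sq, ← integral_const_mul, ← Real.norm_eq_abs, ← Complex.norm_real, hz,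
    Real.fourier_eq]
  refine (norm_integral_le_integral_norm _).trans_eq ?_
  congr 1
  funext v
  rw [Circle.norm_smul, norm_smul, norm_pow, Complex.norm_real]
  simp [abs_of_pos pi_pos]
  ring

theorem iteratedDeriv_comp_add_mul {f : ℝ → ℝ} (hf : ContDiff ℝ ∞ f) (n : ℕ) (p c s : ℝ) :
    iteratedDeriv n (fun s => f (p + c * s)) s = c ^ n * iteratedDeriv n f (p + c * s) := by
  have hsm : ContDiff ℝ n (fun w => f (p + w)) :=
    (hf.comp (contDiff_const.add contDiff_id)).of_le (by exact_mod_cast le_top)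
  have h := congrFun (iteratedDeriv_comp_const_mul hsm c) s
  rwa [iteratedDeriv_comp_const_add] at h

/-- Taylor's theorem on `[0, 1]` for smooth functions on the line, with a uniform bound on the
derivative in the remainder. -/
theorem abs_sub_taylor_le {φ : ℝ → ℝ} (hφ : ContDiff ℝ ∞ φ) (k : ℕ) {M : ℝ}
    (hM : ∀ s, |iteratedDeriv (k + 1) φ s| ≤ M) :
    |φ 1 - ∑ j ∈ Finset.range (k + 1), iteratedDeriv j φ 0 / j.factorial| ≤
      M / (k + 1).factorial := by
  obtain ⟨s, -, hs⟩ := taylor_mean_remainder_lagrange_iteratedDeriv (f := φ) (n := k)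
    (zero_ne_one (α := ℝ)) (hφ.of_le (by exact_mod_cast le_top)).contDiffOn
  have hT : taylorWithinEval φ k (Set.uIcc 0 1) 0 1 =
      ∑ j ∈ Finset.range (k + 1), iteratedDeriv j φ 0 / j.factorial := by
    rw [taylor_within_apply]
    refine Finset.sum_congr rfl fun j _ => ?_
    rw [iteratedDerivWithin_eq_iteratedDeriv (uniqueDiffOn_uIcc zero_ne_one)
      (hφ.contDiffAt.of_le (by exact_mod_cast le_top)) (by simp)]
    simp
    ring
  rw [← hT, hs]
  simp only [sub_zero, one_pow, mul_one, abs_div, Nat.abs_cast]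
  gcongr
  exact hM s

theorem heatKernel_eq_mul_prod (d : ℕ) (t : ℝ) (z : EuclideanSpace ℝ (Fin d)) :
    heatKernel d z t =
      (4 * π * t) ^ (-(d : ℝ) / 2) * ∏ j, rexp (-(z j) ^ 2 / (4 * t)) := by
  rw [heatKernel, ← Real.exp_sum, EuclideanSpace.real_norm_sq_eq, ← Finset.sum_div,
    Finset.sum_neg_distrib]

/-- Derivatives of the heat kernel along a line. -/
theorem abs_iteratedDeriv_exp_norm_sq_le {d : ℕ} (x y : EuclideanSpace ℝ (Fin d)) {t : ℝ}
    (ht : 0 < t) (n : ℕ) (s : ℝ) :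
    |iteratedDeriv n (fun s : ℝ => rexp (-‖x - s • y‖ ^ 2 / (4 * t))) s| ≤
      (‖y‖ / √(4 * π * t)) ^ n *
        ((2 * π) ^ n * (π ^ (-((n : ℝ) + 1) / 2) * Gamma (((n : ℝ) + 1) / 2))) := by
  have h4 : 0 < 4 * π * t := by positivity
  have hsq : √(4 * π * t) ^ 2 = 4 * π * t := Real.sq_sqrt h4.le
  have hsq0 : 0 < √(4 * π * t) := Real.sqrt_pos.mpr h4
  set q := ‖y‖ / √(4 * π * t) with hq
  set p := inner ℝ x y / (‖y‖ * √(4 * π * t)) with hp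
  set r := ‖x‖ ^ 2 / (4 * t) - π * p ^ 2 with hr
  have hpq : p * q = inner ℝ x y / (4 * π * t) := by
    rcases eq_or_ne y 0 with rfl | hy
    · simp [hq]
    · have : 0 < ‖y‖ := norm_pos_iff.mpr hy
      rw [hp, hq, div_mul_div_comm, mul_assoc, ← sq, hsq]
      field_simp
  have hq2 : q ^ 2 = ‖y‖ ^ 2 / (4 * π * t) := by rw [hq, div_pow, hsq]
  have hr0 : 0 ≤ r := by
    rcases eq_or_ne y 0 with rfl | hy
    · simp only [hr, hp, inner_zero_right, zero_div]
      simp only [ne_eq, OfNat.ofNat_ne_zero, not_false_eq_true, zero_pow, mul_zero, sub_zero]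
      positivity
    · have hy : 0 < ‖y‖ := norm_pos_iff.mpr hy
      have hcs : (inner ℝ x y) ^ 2 ≤ (‖x‖ * ‖y‖) ^ 2 := by
        rw [sq_le_sq]
        simpa [abs_mul] using abs_real_inner_le_norm x y
      rw [hr, sub_nonneg, hp, div_pow, mul_pow, hsq, mul_div_assoc',
        div_le_div_iff₀ (by positivity) (by positivity)]
      have := mul_le_mul_of_nonneg_left hcs (by positivity : 0 ≤ 4 * π * t)
      nlinarith
  have hfun : (fun s : ℝ => rexp (-‖x - s • y‖ ^ 2 / (4 * t))) =
      fun s => rexp (-r) * (fun w => rexp (-π * w ^ 2)) (p + (-q) * s) := by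
    funext s
    simp only
    rw [← Real.exp_add]
    congr 1
    rw [norm_sub_sq_real, real_inner_smul_right, norm_smul, mul_pow, Real.norm_eq_abs, sq_abs]
    have e : π * (p + -q * s) ^ 2 = π * p ^ 2 - 2 * s * (π * (p * q)) + s ^ 2 * (π * q ^ 2) := by
      ring
    rw [neg_mul, e, hpq, hq2, hr]
    field_simp
    ring
  have hderiv : iteratedDeriv n (fun s : ℝ => rexp (-‖x - s • y‖ ^ 2 / (4 * t))) s =
      rexp (-r) * ((-q) ^ n * iteratedDeriv n (fun w => rexp (-π * w ^ 2)) (p + (-q) * s)) := by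
    rw [hfun, iteratedDeriv_const_mul_field, iteratedDeriv_comp_add_mul contDiff_exp_neg_pi_sq]
  have hq0 : 0 ≤ q := by positivity
  rw [hderiv, abs_mul, abs_mul, abs_of_pos (Real.exp_pos _), abs_pow, abs_neg, abs_of_nonneg hq0]
  have hexp : rexp (-r) ≤ 1 := Real.exp_le_one_iff.mpr (by linarith)
  refine (mul_le_of_le_one_left (by positivity) hexp).trans ?_
  exact mul_le_mul_of_nonneg_left (abs_iteratedDeriv_exp_neg_pi_sq_le n _) (by positivity)

/-- The summand of the Taylor polynomial of the heat kernel as a Taylor coefficient along a line. -/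
theorem sum_Dmul_heatKernel_eq {d : ℕ} (x y : EuclideanSpace ℝ (Fin d)) (t : ℝ) (j : ℕ) :
    ∑ α ∈ Finset.Nat.antidiagonalTuple d j,
      ((-1 : ℝ) ^ (∑ i, α i) / ∏ i, ((α i).factorial : ℝ)) * (∏ i, y i ^ α i) *
        Dmul d α (fun z => heatKernel d z t) x =
      (4 * π * t) ^ (-(d : ℝ) / 2) *
        (iteratedDeriv j (fun s : ℝ => rexp (-‖x - s • y‖ ^ 2 / (4 * t))) 0 / j.factorial) := by
  have hg : ContDiff ℝ ∞ (fun v : ℝ => rexp (-v ^ 2 / (4 * t))) := by fun_prop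
  have hline : (fun s : ℝ => rexp (-‖x - s • y‖ ^ 2 / (4 * t))) =
      fun s => ∏ i, (fun v : ℝ => rexp (-v ^ 2 / (4 * t))) (x i + (-y i) * s) := by
    funext s
    rw [← Real.exp_sum, EuclideanSpace.real_norm_sq_eq, ← Finset.sum_div, Finset.sum_neg_distrib]
    simp only [PiLp.sub_apply, PiLp.smul_apply, smul_eq_mul]
    congr 4
    funext i
    ring
  have hi : ∀ (i : Fin d) (a : ℕ),
      iteratedDeriv a (fun s => (fun v : ℝ => rexp (-v ^ 2 / (4 * t))) (x i + (-y i) * s)) 0 =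
        (-y i) ^ a * iteratedDeriv a (fun v : ℝ => rexp (-v ^ 2 / (4 * t))) (x i) := by
    intro i a
    rw [iteratedDeriv_comp_add_mul hg, mul_zero, add_zero]
  rw [hline, iteratedDeriv_prod_div_factorial
    (fun i s => (fun v : ℝ => rexp (-v ^ 2 / (4 * t))) (x i + (-y i) * s)) (by fun_prop),
    Finset.mul_sum]
  refine Finset.sum_congr rfl fun α _ => ?_
  simp only [hi]
  have hG : (fun z => heatKernel d z t) = fun z => (4 * π * t) ^ (-(d : ℝ) / 2) *
      ∏ j, (fun _ : Fin d => fun v : ℝ => rexp (-v ^ 2 / (4 * t))) j (z j) :=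
    funext fun z => heatKernel_eq_mul_prod d t z
  rw [hG, Dmul_mul_prod α _ _ fun _ => hg]
  simp only [Finset.prod_div_distrib, Finset.prod_mul_distrib, neg_pow (y _),
    Finset.prod_pow_eq_pow_sum]
  ring

/-- Pointwise Taylor remainder for the heat kernel. -/
theorem abs_heatKernel_sub_taylor_le {d : ℕ} (k : ℕ) (x y : EuclideanSpace ℝ (Fin d)) {t : ℝ}
    (ht : 0 < t) :
    |heatKernel d (x - y) t - ∑ j ∈ Finset.range (k + 1),
      ∑ α ∈ Finset.Nat.antidiagonalTuple d j,
        ((-1 : ℝ) ^ (∑ i, α i) / ∏ i, ((α i).factorial : ℝ)) * (∏ i, y i ^ α i) *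
          Dmul d α (fun z => heatKernel d z t) x| ≤
      (4 * π * t) ^ (-(d : ℝ) / 2) * ((‖y‖ / √(4 * π * t)) ^ (k + 1) *
        ((2 * π) ^ (k + 1) * (π ^ (-(((k + 1 : ℕ) : ℝ) + 1) / 2) *
          Gamma ((((k + 1 : ℕ) : ℝ) + 1) / 2))) / (k + 1).factorial) := by
  have hsm : ContDiff ℝ ∞ (fun s : ℝ => rexp (-‖x - s • y‖ ^ 2 / (4 * t))) := by
    have : ContDiff ℝ ∞ (fun s : ℝ => ‖x - s • y‖ ^ 2) := ContDiff.norm_sq ℝ (by fun_prop)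
    fun_prop
  have hc : 0 < (4 * π * t) ^ (-(d : ℝ) / 2) := by positivity
  have h := abs_sub_taylor_le hsm k
    (fun s => abs_iteratedDeriv_exp_norm_sq_le x y ht (k + 1) s)
  simp only [sum_Dmul_heatKernel_eq, ← Finset.mul_sum]
  rw [heatKernel, ← mul_sub, abs_mul, abs_of_pos hc]
  refine mul_le_mul_of_nonneg_left ?_ hc.le
  simpa only [one_smul] using h

theorem integrable_norm_pow_mul_exp {d : ℕ} (hd : 1 ≤ d) {t₀ : ℝ} (ht₀ : 0 < t₀) (n : ℕ) :
    Integrable (fun y : EuclideanSpace ℝ (Fin d) => ‖y‖ ^ n * rexp (-‖y‖ ^ 2 / (4 * t₀))) := by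
  have : Nonempty (Fin d) := ⟨⟨0, hd⟩⟩
  have : Nontrivial (EuclideanSpace ℝ (Fin d)) := inferInstance
  rw [integrable_fun_norm_addHaar volume
    (f := fun r : ℝ => r ^ n * rexp (-r ^ 2 / (4 * t₀))), finrank_euclideanSpace_fin]
  have h := integrableOn_rpow_mul_exp_neg_mul_sq (b := 1 / (4 * t₀)) (by positivity)
    (s := ((d - 1 + n : ℕ) : ℝ)) (by linarith [((d - 1 + n).cast_nonneg : (0 : ℝ) ≤ _)])
  refine h.congr_fun (fun r _ => ?_) measurableSet_Ioi
  simp only [Real.rpow_natCast, smul_eq_mul, pow_add, mul_assoc]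
  congr 3
  ring

/-- Radial moments of the Gaussian on `ℝ^d`. -/
theorem integral_norm_pow_mul_exp {d : ℕ} (hd : 1 ≤ d) {t₀ : ℝ} (ht₀ : 0 < t₀) (n : ℕ) :
    ∫ y : EuclideanSpace ℝ (Fin d), ‖y‖ ^ n * rexp (-‖y‖ ^ 2 / (4 * t₀)) =
      √π ^ d / Gamma ((d : ℝ) / 2) *
        ((4 * t₀) ^ (((n : ℝ) + d) / 2) * Gamma (((n : ℝ) + d) / 2)) := by
  have : Nonempty (Fin d) := ⟨⟨0, hd⟩⟩
  have : Nontrivial (EuclideanSpace ℝ (Fin d)) := inferInstance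
  have hd0 : (0 : ℝ) < d := by exact_mod_cast hd
  rw [integral_fun_norm_addHaar volume
    (fun r : ℝ => r ^ n * rexp (-r ^ 2 / (4 * t₀))), finrank_euclideanSpace_fin]
  have hG : 0 < Gamma ((d : ℝ) / 2) := Gamma_pos_of_pos (by positivity)
  have hvol : (volume : Measure (EuclideanSpace ℝ (Fin d))).real (Metric.ball 0 1) =
      √π ^ d / ((d : ℝ) / 2 * Gamma ((d : ℝ) / 2)) := by
    rw [Measure.real, EuclideanSpace.volume_ball, Fintype.card_fin,
      Gamma_add_one (by positivity), ENNReal.ofReal_one, one_pow, one_mul,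
      ENNReal.toReal_ofReal (by positivity)]
  have h := integral_rpow_mul_exp_neg_mul_rpow (p := 2) (q := ((d - 1 + n : ℕ) : ℝ))
    (b := 1 / (4 * t₀)) (by norm_num)
    (by linarith [((d - 1 + n).cast_nonneg : (0 : ℝ) ≤ _)]) (by positivity)
  have hint : ∫ r in Set.Ioi (0 : ℝ), r ^ (d - 1) • (r ^ n * rexp (-r ^ 2 / (4 * t₀))) =
      ∫ r in Set.Ioi (0 : ℝ), r ^ ((d - 1 + n : ℕ) : ℝ) *
        rexp (-(1 / (4 * t₀)) * r ^ (2 : ℝ)) := by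
    refine setIntegral_congr_fun measurableSet_Ioi fun r _ => ?_
    simp only [Real.rpow_natCast, Real.rpow_ofNat, smul_eq_mul, pow_add, mul_assoc]
    congr 4
    ring
  have hexp : ((d - 1 + n : ℕ) : ℝ) + 1 = (n : ℝ) + d := by
    rw [Nat.cast_add, Nat.cast_sub hd]; push_cast; ring
  rw [hint, h, hvol, hexp, one_div, Real.inv_rpow (by positivity), neg_div,
    Real.rpow_neg (by positivity), inv_inv, nsmul_eq_mul, smul_eq_mul]
  field_simp

theorem integrable_mul_of_abs_le {d : ℕ} (hd : 1 ≤ d) {C t₀ : ℝ} (ht₀ : 0 < t₀)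
    {u₀ : EuclideanSpace ℝ (Fin d) → ℝ} (hmeas : Measurable u₀)
    (hbound : ∀ᵐ (x : EuclideanSpace ℝ (Fin d)) ∂volume,
      |u₀ x| ≤ C * Real.exp (-‖x‖ ^ 2 / (4 * t₀)))
    {w : EuclideanSpace ℝ (Fin d) → ℝ} (hw : Continuous w) {K : ℝ} (n : ℕ)
    (hwK : ∀ y, |w y| ≤ K * ‖y‖ ^ n) :
    Integrable (fun y => w y * u₀ y) := by
  refine Integrable.mono' ((integrable_norm_pow_mul_exp hd ht₀ n).const_mul (K * C))
    (hw.measurable.mul hmeas).aestronglyMeasurable ?_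
  filter_upwards [hbound] with y hy
  rw [Real.norm_eq_abs, abs_mul]
  calc |w y| * |u₀ y| ≤ (K * ‖y‖ ^ n) * (C * rexp (-‖y‖ ^ 2 / (4 * t₀))) :=
        mul_le_mul (hwK y) hy (abs_nonneg _) ((abs_nonneg _).trans (hwK y))
    _ = _ := by ring

theorem abs_prod_pow_le_norm_pow {d : ℕ} (α : Fin d → ℕ) (y : EuclideanSpace ℝ (Fin d)) :
    |∏ i, y i ^ α i| ≤ ‖y‖ ^ ∑ i, α i := by
  rw [Finset.abs_prod, ← Finset.prod_pow_eq_pow_sum]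
  refine Finset.prod_le_prod (fun _ _ => abs_nonneg _) fun i _ => ?_
  rw [abs_pow]
  exact pow_le_pow_left₀ (abs_nonneg _) (PiLp.norm_apply_le y i) _

theorem heatKernel_le {d : ℕ} (z : EuclideanSpace ℝ (Fin d)) {t : ℝ} (ht : 0 < t) :
    |heatKernel d z t| ≤ (4 * π * t) ^ (-(d : ℝ) / 2) := by
  have hc : 0 < (4 * π * t) ^ (-(d : ℝ) / 2) := by positivity
  rw [heatKernel, abs_mul, abs_of_pos hc, abs_of_pos (Real.exp_pos _)]
  refine mul_le_of_le_one_right hc.le (Real.exp_le_one_iff.mpr ?_)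
  rw [neg_div, neg_nonpos]
  positivity

theorem heat_error_const_eq {d n : ℕ} {C t t₀ : ℝ} (ht : 0 < t) (ht₀ : 0 < t₀) :
    (4 * π * t) ^ (-(d : ℝ) / 2) * ((2 * π) ^ n * (π ^ (-((n : ℝ) + 1) / 2) *
        Gamma (((n : ℝ) + 1) / 2)) / √(4 * π * t) ^ n / n.factorial) *
      (C * (√π ^ d / Gamma ((d : ℝ) / 2) *
        ((4 * t₀) ^ (((n : ℝ) + d) / 2) * Gamma (((n : ℝ) + d) / 2)))) =
    C * (t₀ / t) ^ (((n : ℝ) + d) / 2) / n.factorial *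
      (2 ^ n / √π * Gamma (((n : ℝ) + 1) / 2) * Gamma (((n : ℝ) + d) / 2) /
        Gamma ((d : ℝ) / 2)) := by
  have h1 : √π ^ d = π ^ ((d : ℝ) / 2) := by
    rw [Real.sqrt_eq_rpow, ← Real.rpow_natCast, ← Real.rpow_mul pi_pos.le]; congr 1; ring
  have h2 : √(4 * π * t) ^ n = (4 * t) ^ ((n : ℝ) / 2) * π ^ ((n : ℝ) / 2) := by
    rw [Real.sqrt_eq_rpow, ← Real.rpow_natCast, ← Real.rpow_mul (by positivity),
      show 4 * π * t = (4 * t) * π by ring, Real.mul_rpow (by positivity) pi_pos.le]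
    ring_nf
  have h3 : (4 * π * t) ^ (-(d : ℝ) / 2) = ((4 * t) ^ ((d : ℝ) / 2) * π ^ ((d : ℝ) / 2))⁻¹ := by
    rw [neg_div, Real.rpow_neg (by positivity), show 4 * π * t = (4 * t) * π by ring,
      Real.mul_rpow (by positivity) pi_pos.le]
  have h4 : π ^ (-((n : ℝ) + 1) / 2) = (π ^ ((n : ℝ) / 2) * √π)⁻¹ := by
    rw [neg_div, Real.rpow_neg pi_pos.le, Real.sqrt_eq_rpow, ← Real.rpow_add pi_pos]
    congr 2; ring
  have h5 : (t₀ / t) ^ (((n : ℝ) + d) / 2) =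
      (4 * t₀) ^ (((n : ℝ) + d) / 2) / ((4 * t) ^ ((n : ℝ) / 2) * (4 * t) ^ ((d : ℝ) / 2)) := by
    rw [← Real.rpow_add (by positivity), ← add_div, ← Real.div_rpow (by positivity) (by positivity),
      mul_div_mul_left _ _ (by norm_num : (4 : ℝ) ≠ 0)]
  have h6 : π ^ n = π ^ ((n : ℝ) / 2) * π ^ ((n : ℝ) / 2) := by
    rw [← Real.rpow_add pi_pos, add_halves, Real.rpow_natCast]
  rw [h1, h2, h3, h4, h5, mul_pow, h6]
  have hπ : 0 < √π := Real.sqrt_pos.mpr pi_pos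
  have a1 : 0 < π ^ ((n : ℝ) / 2) := by positivity
  have a2 : 0 < π ^ ((d : ℝ) / 2) := by positivity
  generalize π ^ ((n : ℝ) / 2) = A at *
  generalize π ^ ((d : ℝ) / 2) = B at *
  field_simp

/-- Convergence Condition, quantitative form: if `|u₀| ≤ C e^{-|x|²/(4t₀)}`
a.e., then the approximation error is bounded by `G(k)` uniformly in `x`. -/
theorem stmt_8 (d k : ℕ) (hd : 1 ≤ d) (C t₀ : ℝ) (hC : 0 < C) (ht₀ : 0 < t₀)
    (u₀ : EuclideanSpace ℝ (Fin d) → ℝ) (hmeas : Measurable u₀)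
    (hbound : ∀ᵐ (x : EuclideanSpace ℝ (Fin d)) ∂volume,
      |u₀ x| ≤ C * Real.exp (-‖x‖ ^ 2 / (4 * t₀)))
    (t : ℝ) (ht : 0 < t) (x : EuclideanSpace ℝ (Fin d)) :
    |(∫ y, heatKernel d (x - y) t * u₀ y) - heatApprox d k u₀ x t| ≤
      C * (t₀ / t) ^ (((k : ℝ) + d + 1) / 2) *
        (1 + ((k : ℝ) + 1) / d) ^ (-(d : ℝ) / 12) *
        ((k + d).factorial : ℝ) / (((k + 1).factorial : ℝ) * ((d - 1).factorial : ℝ)) := by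
  have hmono : ∀ α : Fin d → ℕ, Integrable (fun y => (∏ i, y i ^ α i) * u₀ y) := fun α =>
    integrable_mul_of_abs_le hd ht₀ hmeas hbound (by fun_prop) (K := 1) (∑ i, α i)
      (fun y => by simpa using abs_prod_pow_le_norm_pow α y)
  have hker : Integrable (fun y => heatKernel d (x - y) t * u₀ y) :=
    integrable_mul_of_abs_le hd ht₀ hmeas hbound (by unfold heatKernel; fun_prop) 0
      (fun y => by simpa using heatKernel_le (x - y) ht)
  set P : EuclideanSpace ℝ (Fin d) → ℝ := fun y => ∑ j ∈ Finset.range (k + 1),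
      ∑ α ∈ Finset.Nat.antidiagonalTuple d j,
        ((-1 : ℝ) ^ (∑ i, α i) / ∏ i, ((α i).factorial : ℝ)) * (∏ i, y i ^ α i) *
          Dmul d α (fun z => heatKernel d z t) x with hP
  have hPu : ∀ y, P y * u₀ y = ∑ j ∈ Finset.range (k + 1),
      ∑ α ∈ Finset.Nat.antidiagonalTuple d j,
        ((-1 : ℝ) ^ (∑ i, α i) / ∏ i, ((α i).factorial : ℝ)) *
          ((∏ i, y i ^ α i) * u₀ y) * Dmul d α (fun z => heatKernel d z t) x := by
    intro y
    simp only [hP, Finset.sum_mul]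
    refine Finset.sum_congr rfl fun j _ => Finset.sum_congr rfl fun α _ => ?_
    ring
  have hterm : ∀ α : Fin d → ℕ, Integrable (fun y =>
      ((-1 : ℝ) ^ (∑ i, α i) / ∏ i, ((α i).factorial : ℝ)) *
          ((∏ i, y i ^ α i) * u₀ y) * Dmul d α (fun z => heatKernel d z t) x) :=
    fun α => ((hmono α).const_mul _).mul_const _
  have hPint : Integrable (fun y => P y * u₀ y) := by
    simp only [hPu]
    exact integrable_finsetSum _ fun j _ => integrable_finsetSum _ fun α _ => hterm α
  have happrox : heatApprox d k u₀ x t = ∫ y, P y * u₀ y := by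
    simp only [hPu]
    rw [heatApprox, integral_finsetSum _ fun j _ => integrable_finsetSum _ fun α _ => hterm α]
    refine Finset.sum_congr rfl fun j _ => ?_
    rw [integral_finsetSum _ fun α _ => hterm α]
    refine Finset.sum_congr rfl fun α _ => ?_
    rw [integral_mul_const, integral_const_mul]
  set K : ℝ := (4 * π * t) ^ (-(d : ℝ) / 2) *
    ((2 * π) ^ (k + 1) * (π ^ (-(((k + 1 : ℕ) : ℝ) + 1) / 2) *
      Gamma ((((k + 1 : ℕ) : ℝ) + 1) / 2)) / √(4 * π * t) ^ (k + 1) / (k + 1).factorial) with hK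
  have hpoint : ∀ y, |heatKernel d (x - y) t - P y| ≤ K * ‖y‖ ^ (k + 1) := fun y =>
    (abs_heatKernel_sub_taylor_le k x y ht).trans_eq (by rw [hK, div_pow]; ring)
  rw [happrox, ← integral_sub hker hPint, ← Real.norm_eq_abs]
  calc ‖∫ y, (heatKernel d (x - y) t * u₀ y - P y * u₀ y)‖
      ≤ ∫ y : EuclideanSpace ℝ (Fin d),
          K * C * (‖y‖ ^ (k + 1) * rexp (-‖y‖ ^ 2 / (4 * t₀))) := by
        refine norm_integral_le_of_norm_le
          ((integrable_norm_pow_mul_exp hd ht₀ (k + 1)).const_mul (K * C)) ?_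
        filter_upwards [hbound] with y hy
        rw [← sub_mul, Real.norm_eq_abs, abs_mul]
        calc _ ≤ (K * ‖y‖ ^ (k + 1)) * (C * rexp (-‖y‖ ^ 2 / (4 * t₀))) :=
              mul_le_mul (hpoint y) hy (abs_nonneg _) ((abs_nonneg _).trans (hpoint y))
          _ = _ := by ring
    _ = C * (t₀ / t) ^ ((((k + 1 : ℕ) : ℝ) + d) / 2) / (k + 1).factorial *
          (2 ^ (k + 1) / √π * Gamma ((((k + 1 : ℕ) : ℝ) + 1) / 2) *
            Gamma ((((k + 1 : ℕ) : ℝ) + d) / 2) / Gamma ((d : ℝ) / 2)) := by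
        rw [integral_const_mul, integral_norm_pow_mul_exp hd ht₀, mul_assoc K, hK,
          heat_error_const_eq ht ht₀]
    _ ≤ C * (t₀ / t) ^ ((((k + 1 : ℕ) : ℝ) + d) / 2) / (k + 1).factorial *
          ((1 + ((k + 1 : ℕ) : ℝ) / d) ^ (-(d : ℝ) / 12) *
            ((k + 1 + d - 1).factorial / (d - 1).factorial)) :=
        mul_le_mul_of_nonneg_left (gamma_const_le (k + 1) d hd) (by positivity)
    _ = _ := by
        rw [show k + 1 + d - 1 = k + d by omega]
        push_cast
        rw [show (k : ℝ) + 1 + d = k + d + 1 by ring]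
        field_simp

end
end

section
/- Let d = 1, C > 0, t₀ > 0, and u₀(x) = C e^{−x²/(4t₀)}. Let u_k be the heat-kernel derivative approximation of order k built from u₀. Fix t with 0 < t < t₀. Then there exists a constant B > 0, independent of k, such that for every sufficiently large k, |u_k(0,t)| ≥ B (t₀/t)^{⌊k/2⌋} √(1/(⌊k/2⌋ − 1)). -/
open MeasureTheory Real Filter

noncomputable section

/-- The one-dimensional heat kernel `G(x,t) = (4πt)^{-1/2} exp(-x²/(4t))`. -/
def heatKernel1 (x t : ℝ) : ℝ :=
  (4 * π * t) ^ (-(1 : ℝ) / 2) * Real.exp (-x ^ 2 / (4 * t))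

/-- The one-dimensional heat-kernel derivative approximation of order `k`:
`u_k(x,t) = ∑_{j=0}^k ((-1)^j/j!) (∫ y^j u₀(y) dy) ∂_x^j G(x,t)`. -/
def heatApprox1 (k : ℕ) (u₀ : ℝ → ℝ) (x t : ℝ) : ℝ :=
  ∑ j ∈ Finset.range (k + 1),
    ((-1 : ℝ) ^ j / (j.factorial : ℝ)) * (∫ y, y ^ j * u₀ y) *
      iteratedDeriv j (fun z => heatKernel1 z t) x

open scoped Nat

/-- An alternating sum of positive, eventually geometrically growing terms is eventually
comparable to its last term. -/
theorem eventually_le_abs_alternating_sum {b : ℕ → ℝ} {q : ℝ} (hq : 1 < q)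
    (hb : ∀ n, 0 < b n) (hgrow : ∀ᶠ n in atTop, q * b n ≤ b (n + 1)) :
    ∀ᶠ n in atTop,
      (1 - 1 / q) / 2 * b n ≤ |∑ m ∈ Finset.range (n + 1), (-1 : ℝ) ^ m * b m| := by
  obtain ⟨M, hM⟩ := eventually_atTop.1 hgrow
  set T : ℕ → ℝ := fun n => (-1) ^ n * ∑ m ∈ Finset.range (n + 1), (-1 : ℝ) ^ m * b m with hT
  have hrec : ∀ n, T (n + 1) = b (n + 1) - T n := by
    intro n
    have h1 : ((-1 : ℝ) ^ (n + 1)) * (-1) ^ (n + 1) = 1 := by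
      rw [← mul_pow]; norm_num
    simp only [hT]
    rw [Finset.sum_range_succ _ (n + 1), mul_add, ← mul_assoc, h1]
    ring
  have habs : ∀ n, |∑ m ∈ Finset.range (n + 1), (-1 : ℝ) ^ m * b m| = |T n| := by
    intro n
    simp [hT, abs_mul]
  set D := |T M|
  have hmono : ∀ n, M ≤ n → b n ≤ b (n + 1) := fun n hn => by
    nlinarith [hM n hn, hb n]
  have hbd : ∀ n, M ≤ n → -D ≤ T n ∧ T n ≤ b n + D := by
    intro n hn
    induction n, hn using Nat.le_induction with
    | base => exact ⟨neg_abs_le _, by linarith [le_abs_self (T M), hb M]⟩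
    | succ n hn ih =>
      rw [hrec]
      exact ⟨by linarith [hmono n hn, ih.2], by linarith [ih.1]⟩
  have hlim : Tendsto b atTop atTop := by
    rw [← tendsto_add_atTop_iff_nat M]
    refine tendsto_atTop_of_geom_le (c := q) (by simpa using hb M) hq fun n => ?_
    have := hM (n + M) (by omega)
    rwa [show n + 1 + M = n + M + 1 by ring]
  have hq0 : 0 < q := by linarith
  have hc : 0 < (1 - 1 / q) / 2 := by
    have : 1 / q < 1 := by rw [div_lt_one hq0]; exact hq
    linarith
  filter_upwards [eventually_ge_atTop (M + 1),
    (hlim.const_mul_atTop hc).eventually_ge_atTop D] with n hn hD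
  obtain ⟨n, rfl⟩ : ∃ p, n = p + 1 := ⟨n - 1, by omega⟩
  have hn' : M ≤ n := by omega
  rw [habs]
  refine le_trans ?_ (le_abs_self _)
  rw [hrec]
  have h1 : b n ≤ 1 / q * b (n + 1) := by
    rw [one_div, ← div_eq_inv_mul, le_div_iff₀ hq0]
    linarith [hM n hn']
  linarith [(hbd n hn').2]

theorem integral_even_pow_mul_gaussian {s : ℝ} (hs : 0 < s) (m : ℕ) :
    ∫ y : ℝ, y ^ (2 * m) * Real.exp (-y ^ 2 / s) = s ^ m * √s * Real.Gamma (m + 1 / 2) := by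
  have h := integral_comp_abs (f := fun y : ℝ => y ^ (2 * m) * Real.exp (-y ^ 2 / s))
  simp only [sq_abs, pow_mul] at h
  simp only [pow_mul]
  rw [h]
  have h2 := integral_rpow_mul_exp_neg_mul_rpow (p := 2) (q := 2 * m) (b := 1 / s) (by norm_num)
    (by have : (0 : ℝ) ≤ m := m.cast_nonneg
        linarith) (by positivity)
  have h3 : ∫ y in Set.Ioi (0 : ℝ), (y ^ 2) ^ m * Real.exp (-y ^ 2 / s) =
      ∫ y in Set.Ioi (0 : ℝ), y ^ (2 * m : ℝ) * Real.exp (-(1 / s) * y ^ (2 : ℝ)) := by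
    refine setIntegral_congr_fun measurableSet_Ioi fun y hy => ?_
    have e : y ^ (2 * m : ℝ) = (y ^ 2) ^ m := by
      rw [← pow_mul]; exact_mod_cast Real.rpow_natCast y (2 * m)
    simp only [e, Real.rpow_two]
    congr 2
    ring
  rw [h3, h2, one_div, Real.inv_rpow hs.le, ← Real.rpow_neg hs.le,
    show -(-(2 * (m : ℝ) + 1) / 2) = m + 1 / 2 by ring, Real.rpow_add hs, Real.rpow_natCast,
    ← Real.sqrt_eq_rpow, show (2 * (m : ℝ) + 1) / 2 = m + 1 / 2 by ring]
  ring

theorem iteratedDeriv_heatKernel1_zero {t : ℝ} (ht : 0 < t) (j : ℕ) :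
    iteratedDeriv j (fun z => heatKernel1 z t) 0 =
      (4 * π * t) ^ (-(1 : ℝ) / 2) * ((√(2 * t))⁻¹ ^ j *
        ((-1) ^ j * ((Polynomial.hermite j).coeff 0 : ℝ))) := by
  have e : (fun z => heatKernel1 z t) = fun z => (4 * π * t) ^ (-(1 : ℝ) / 2) *
      (fun y => Real.exp (-(y ^ 2 / 2))) ((√(2 * t))⁻¹ * z) := by
    funext z
    simp only [heatKernel1]
    congr 2
    rw [mul_pow, inv_pow, Real.sq_sqrt (by positivity)]
    field_simp
    ring
  rw [e, iteratedDeriv_const_mul_field,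
    iteratedDeriv_comp_const_mul (f := fun y => Real.exp (-(y ^ 2 / 2))) (by fun_prop)]
  simp only [iteratedDeriv_eq_iterate, Polynomial.deriv_gaussian_eq_hermite_mul_gaussian]
  simp [Polynomial.aeval_def, Polynomial.eval₂_at_zero]

theorem iteratedDeriv_odd_heatKernel1_zero {t : ℝ} (ht : 0 < t) (m : ℕ) :
    iteratedDeriv (2 * m + 1) (fun z => heatKernel1 z t) 0 = 0 := by
  rw [iteratedDeriv_heatKernel1_zero ht, Polynomial.coeff_hermite_of_odd_add (by simp)]
  simp

theorem iteratedDeriv_even_heatKernel1_zero {t : ℝ} (ht : 0 < t) (m : ℕ) :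
    iteratedDeriv (2 * m) (fun z => heatKernel1 z t) 0 =
      (4 * π * t) ^ (-(1 : ℝ) / 2) * ((-1) ^ m * (2 * m)! / (m ! * (4 * t) ^ m)) := by
  have hd : ((2 * m - 1)‼ : ℝ) = (2 * m)! / (2 ^ m * m !) := by
    rw [eq_div_iff (by positivity)]
    cases m with
    | zero => simp
    | succ m =>
      have h := Nat.factorial_eq_mul_doubleFactorial (2 * m + 1)
      have h2 := Nat.doubleFactorial_two_mul (m + 1)
      rw [show 2 * m + 1 + 1 = 2 * (m + 1) by ring, h2] at h
      rw [h, show 2 * (m + 1) - 1 = 2 * m + 1 by omega]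
      push_cast
      ring
  have hc := Polynomial.coeff_hermite_explicit m 0
  simp only [add_zero, Nat.choose_zero_right, Nat.cast_one, mul_one] at hc
  rw [iteratedDeriv_heatKernel1_zero ht, hc, pow_mul, inv_pow, Real.sq_sqrt (by positivity), inv_pow]
  push_cast
  rw [hd, show (4 * t) = 2 * (2 * t) by ring, mul_pow 2 (2 * t), pow_mul]
  field_simp
  norm_num

theorem heatApprox1_gaussian_zero {C t₀ t : ℝ} (ht₀ : 0 < t₀) (ht : 0 < t) (k : ℕ) :
    heatApprox1 k (fun x => C * Real.exp (-x ^ 2 / (4 * t₀))) 0 t =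
      C * √(4 * t₀) * (4 * π * t) ^ (-(1 : ℝ) / 2) *
        ∑ m ∈ Finset.range (k / 2 + 1),
          (-1 : ℝ) ^ m * ((t₀ / t) ^ m * (Real.Gamma (m + 1 / 2) / m !)) := by
  have heven : ∀ m : ℕ, ((-1 : ℝ) ^ (2 * m) / ((2 * m).factorial : ℝ)) *
      (∫ y, y ^ (2 * m) * (C * Real.exp (-y ^ 2 / (4 * t₀)))) *
      iteratedDeriv (2 * m) (fun z => heatKernel1 z t) 0 =
      C * √(4 * t₀) * (4 * π * t) ^ (-(1 : ℝ) / 2) *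
        ((-1 : ℝ) ^ m * ((t₀ / t) ^ m * (Real.Gamma (m + 1 / 2) / m !))) := by
    intro m
    simp only [mul_left_comm _ C]
    rw [integral_const_mul, integral_even_pow_mul_gaussian (by positivity),
      iteratedDeriv_even_heatKernel1_zero ht, mul_pow, mul_pow, div_pow, pow_mul]
    field_simp
    norm_num
  have hsum : ∀ n : ℕ, heatApprox1 (2 * n) (fun x => C * Real.exp (-x ^ 2 / (4 * t₀))) 0 t =
      C * √(4 * t₀) * (4 * π * t) ^ (-(1 : ℝ) / 2) *
        ∑ m ∈ Finset.range (n + 1),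
          (-1 : ℝ) ^ m * ((t₀ / t) ^ m * (Real.Gamma (m + 1 / 2) / m !)) := by
    intro n
    induction n with
    | zero =>
      have := heven 0
      simpa [heatApprox1] using this
    | succ n ih =>
      rw [Finset.sum_range_succ, mul_add (_ * _ : ℝ), ← ih, ← heven]
      simp only [heatApprox1]
      rw [show 2 * (n + 1) + 1 = 2 * n + 1 + 1 + 1 by ring, Finset.sum_range_succ,
        Finset.sum_range_succ, iteratedDeriv_odd_heatKernel1_zero ht, mul_zero, add_zero]
      rfl
  obtain ⟨n, rfl | rfl⟩ := k.even_or_odd'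
  · rw [hsum, Nat.mul_div_cancel_left n two_pos]
  · rw [show (2 * n + 1) / 2 = n by omega, ← hsum]
    simp only [heatApprox1]
    rw [Finset.sum_range_succ, iteratedDeriv_odd_heatKernel1_zero ht, mul_zero, add_zero]

theorem Gamma_add_half_div_factorial_succ (m : ℕ) :
    Real.Gamma ((m + 1 : ℕ) + 1 / 2) / (m + 1)! =
      (m + 1 / 2) / (m + 1) * (Real.Gamma (m + 1 / 2) / m !) := by
  rw [Nat.cast_succ, show (m : ℝ) + 1 + 1 / 2 = (m + 1 / 2) + 1 by ring,
    Real.Gamma_add_one (by positivity), Nat.factorial_succ]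
  push_cast
  field_simp

theorem Gamma_add_half_div_factorial_pos (m : ℕ) :
    0 < Real.Gamma (m + 1 / 2) / m ! :=
  div_pos (Real.Gamma_pos_of_pos (by positivity)) (by positivity)

theorem sqrt_inv_le_Gamma_add_half_div_factorial {n : ℕ} (hn : 1 ≤ n) :
    1 / 2 * √(1 / n) ≤ Real.Gamma (n + 1 / 2) / n ! := by
  have key : 1 / 4 ≤ n * (Real.Gamma (n + 1 / 2) / n !) ^ 2 := by
    induction n, hn using Nat.le_induction with
    | base =>
      have h := Gamma_add_half_div_factorial_succ 0
      simp only [zero_add] at h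
      rw [h]
      simp only [CharP.cast_eq_zero, zero_add, Real.Gamma_one_half_eq]
      norm_num [div_pow, mul_pow, Real.sq_sqrt Real.pi_pos.le]
      linarith [Real.pi_gt_three]
    | succ n hn ih =>
      rw [Gamma_add_half_div_factorial_succ, mul_pow, ← mul_assoc]
      refine ih.trans (mul_le_mul_of_nonneg_right ?_ (sq_nonneg _))
      push_cast
      rw [div_pow, mul_div_assoc', le_div_iff₀ (by positivity)]
      nlinarith [(n.cast_nonneg : (0 : ℝ) ≤ n)]
  have hn0 : (0 : ℝ) < n := by exact_mod_cast hn
  refine (sq_le_sq₀ (by positivity) (Gamma_add_half_div_factorial_pos n).le).1 ?_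
  rw [mul_pow, Real.sq_sqrt (by positivity), mul_one_div, div_le_iff₀ hn0]
  linarith

/-- Divergence, `d = 1`: for `0 < t < t₀` there is `B > 0`, independent
of `k`, with `|u_k(0,t)| ≥ B (t₀/t)^{⌊k/2⌋} √(1/(⌊k/2⌋ - 1))` for all large `k`. -/
theorem stmt_12 (C t₀ : ℝ) (hC : 0 < C) (ht₀ : 0 < t₀) (t : ℝ) (ht : 0 < t)
    (htt₀ : t < t₀) :
    ∃ B > (0 : ℝ), ∀ᶠ k : ℕ in atTop,
      B * (t₀ / t) ^ (k / 2) * Real.sqrt (1 / (((k / 2 : ℕ) : ℝ) - 1)) ≤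
        |heatApprox1 k (fun x => C * Real.exp (-x ^ 2 / (4 * t₀))) 0 t| := by
  have hr : 1 < t₀ / t := by rwa [one_lt_div ht]
  set r := t₀ / t
  set q := (1 + r) / 2 with hqdef
  have hq : 1 < q := by linarith
  have hK : 0 < C * √(4 * t₀) * (4 * π * t) ^ (-(1 : ℝ) / 2) := by positivity
  set K := C * √(4 * t₀) * (4 * π * t) ^ (-(1 : ℝ) / 2)
  have hgrow : ∀ᶠ n : ℕ in atTop, q * (r ^ n * (Real.Gamma (n + 1 / 2) / n !)) ≤
      r ^ (n + 1) * (Real.Gamma ((n + 1 : ℕ) + 1 / 2) / (n + 1)!) := by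
    filter_upwards [tendsto_natCast_atTop_atTop.eventually_ge_atTop (1 / (r - 1))] with n hn
    rw [div_le_iff₀ (by linarith)] at hn
    rw [Gamma_add_half_div_factorial_succ, pow_succ,
      show r ^ n * r * (((n : ℝ) + 1 / 2) / (n + 1) * (Real.Gamma (n + 1 / 2) / n !)) =
        r * ((n + 1 / 2) / (n + 1)) * (r ^ n * (Real.Gamma (n + 1 / 2) / n !)) by ring]
    refine mul_le_mul_of_nonneg_right ?_
      (mul_pos (by positivity) (Gamma_add_half_div_factorial_pos n)).le
    rw [mul_div_assoc', le_div_iff₀ (by positivity)]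
    nlinarith
  have hev := eventually_le_abs_alternating_sum hq
    (fun n => mul_pos (by positivity) (Gamma_add_half_div_factorial_pos n)) hgrow
  have hc : 0 < (1 - 1 / q) / 2 := by
    have : 1 / q < 1 := by rw [div_lt_one (by linarith)]; exact hq
    linarith
  set c := (1 - 1 / q) / 2
  refine ⟨K * c / 4, by positivity, ?_⟩
  have hdiv : Tendsto (fun k : ℕ => k / 2) atTop atTop := Nat.tendsto_div_const_atTop two_ne_zero
  filter_upwards [hdiv.eventually hev, hdiv.eventually_ge_atTop 2] with k hk hk2
  rw [heatApprox1_gaussian_zero ht₀ ht, abs_mul, abs_of_pos hK]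
  generalize k / 2 = n at hk hk2 ⊢
  refine le_trans ?_ (mul_le_mul_of_nonneg_left hk hK.le)
  have hn : (2 : ℝ) ≤ n := by exact_mod_cast hk2
  have hs : √(1 / ((n : ℝ) - 1)) ≤ 2 * √(1 / n) := by
    rw [show (2 : ℝ) = √4 by rw [show (4 : ℝ) = 2 ^ 2 by norm_num]; simp,
      ← Real.sqrt_mul (by norm_num)]
    refine Real.sqrt_le_sqrt ?_
    rw [mul_one_div, div_le_div_iff₀ (by linarith) (by linarith)]
    linarith
  have hG := sqrt_inv_le_Gamma_add_half_div_factorial (n := n) (by omega)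
  calc K * c / 4 * r ^ n * √(1 / ((n : ℝ) - 1))
      ≤ K * c / 4 * r ^ n * (4 * (Real.Gamma (n + 1 / 2) / n !)) := by
        gcongr
        linarith
    _ = K * (c * (r ^ n * (Real.Gamma (n + 1 / 2) / n !))) := by ring

end
end

section
/- There exists a constant B > 0 such that for every sufficiently large natural number k, | Γ((k+1)/2) / Γ(k/2 + 1) − √(2/k) | ≤ B/k, where Γ is the real Gamma function. -/
open Real Filter

/-- Midpoint log-convexity of the Gamma function. -/
lemma sq_Gamma_add_half_le {x : ℝ} (hx : 0 < x) :
    Real.Gamma (x + 1 / 2) ^ 2 ≤ Real.Gamma x * Real.Gamma (x + 1) := by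
  have h := Real.Gamma_mul_add_mul_le_rpow_Gamma_mul_rpow_Gamma hx (by linarith : 0 < x + 1)
    (by norm_num : (0 : ℝ) < 1 / 2) (by norm_num : (0 : ℝ) < 1 / 2) (by norm_num)
  have hG := Real.Gamma_pos_of_pos hx
  have hH := Real.Gamma_pos_of_pos (by linarith : 0 < x + 1)
  rw [← Real.mul_rpow hG.le hH.le, ← Real.sqrt_eq_rpow,
    show 1 / 2 * x + 1 / 2 * (x + 1) = x + 1 / 2 by ring] at h
  exact (Real.le_sqrt' (Real.Gamma_pos_of_pos (by linarith))).1 h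

/-- there is `B > 0` with
`|Γ((k+1)/2)/Γ(k/2+1) - √(2/k)| ≤ B/k` for all sufficiently large `k`. -/
theorem stmt_15 :
    ∃ B > (0 : ℝ), ∀ᶠ k : ℕ in atTop,
      |Real.Gamma (((k : ℝ) + 1) / 2) / Real.Gamma ((k : ℝ) / 2 + 1) -
          Real.sqrt (2 / (k : ℝ))| ≤ B / (k : ℝ) := by
  refine ⟨2, by norm_num, ?_⟩
  filter_upwards [eventually_ge_atTop 1] with n hn
  have hk : (1 : ℝ) ≤ n := by exact_mod_cast hn
  generalize (n : ℝ) = k at hk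
  have hk0 : 0 < k := by linarith
  have h1 := sq_Gamma_add_half_le (x := k / 2) (by linarith)
  have h2 := sq_Gamma_add_half_le (x := (k + 1) / 2) (by linarith)
  have e1 := Real.Gamma_add_one (s := k / 2) (by linarith)
  have e2 := Real.Gamma_add_one (s := (k + 1) / 2) (by linarith)
  rw [show k / 2 + 1 / 2 = (k + 1) / 2 by ring] at h1
  rw [show (k + 1) / 2 + 1 / 2 = k / 2 + 1 by ring, e2] at h2
  have hG : 0 < Real.Gamma ((k + 1) / 2) := Real.Gamma_pos_of_pos (by linarith)
  have hH : 0 < Real.Gamma (k / 2 + 1) := Real.Gamma_pos_of_pos (by linarith)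
  generalize Real.Gamma ((k + 1) / 2) = G at *
  generalize Real.Gamma (k / 2 + 1) = H at *
  have hr : 0 < G / H := by positivity
  have upper : (G / H) ^ 2 ≤ 2 / k := by
    rw [div_pow, div_le_div_iff₀ (by positivity) hk0]
    nlinarith
  have lower : 2 / (k + 1) ≤ (G / H) ^ 2 := by
    rw [div_pow, div_le_div_iff₀ (by positivity) (by positivity)]
    nlinarith
  have hs : √(2 / k) ^ 2 = 2 / k := Real.sq_sqrt (by positivity)
  have hrs : G / H ≤ √(2 / k) := Real.le_sqrt_of_sq_le upper
  have hks : 1 / k ≤ √(2 / k) := by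
    apply Real.le_sqrt_of_sq_le
    rw [div_pow, div_le_div_iff₀ (by positivity) hk0]
    nlinarith
  have gap : 2 / k - 2 / (k + 1) ≤ 2 / k * (1 / k) := by
    rw [div_sub_div _ _ (by positivity) (by positivity), div_mul_div_comm,
      div_le_div_iff₀ (by positivity) (by positivity)]
    nlinarith [sq_nonneg k]
  have hk' : 0 < 1 / k := by positivity
  rw [abs_sub_comm, abs_of_nonneg (by linarith)]
  by_contra! hlt
  nlinarith [mul_lt_mul hlt hks hk' (by linarith), mul_nonneg (sub_nonneg.2 hrs) hr.le]
end
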